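/- Let γ > 0, 1 < α < 2, p > 1, a > 0, b > 0, and let f be locally integrable on [0,∞). Suppose w ∈ C¹([0,∞)), w ≢ 0, the function t ↦ ₀I_t^{2−α}(w(s) − w'(0)s − w(0)) is in AC²([0,T]) for every T > 0, and for almost every t ≥ 0 one has (₀D_t^α w)(t) + a·w(t) = (₀I_t^γ f)(t) and f(t) ≥ b·|w(t)|^p. If γ ≥ α/2 and α + γ > 2, then liminf_{t→+∞} t^{1−γ}·w(t) > 0. -/

import Mathlib

/-!
Write `e_τ(t) = t ^ (τ - 1) E_{α,τ}(-a t ^ α)` (`ml`) and `g_τ(t) = t ^ (τ - 1) / Γ(τ)` (`pw`), and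
let `∗` be convolution on the half-line. The equation is solved by variation of constants
(`representation`): for almost every `t > 0`,
`w = w(0) e_1 + w'(0) e_2 + e_{α+γ} ∗ f`.

The forced term grows at least like `t ^ (γ - 1)`. Indeed `f ≥ b |w| ^ p ≥ 0` has positive mass on
some `[0, R]`, the kernel `e_{α+γ}` is nonnegative, and it is at least `c t ^ (γ - 1)` for large `t`,
since `a e_{α+γ} = g_γ - e_γ` with `e_γ` of smaller order. The homogeneous terms `e_1`, `e_2` are
`o(t ^ (γ - 1))` because `γ > 2 - α`. Hence `t ^ (1 - γ) w(t)` is bounded below by a positive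
constant for almost every large `t`, and for every large `t` by continuity of `w`.

Two facts about the kernels carry the argument.

* Positivity (`ml_nonneg`): `e_τ ≥ 0` for `τ ≥ 3 α / 2`, which is where `γ ≥ α / 2` enters. Higher
  orders are fractional integrals of the critical order `3 α / 2`. Its Laplace transform is
  `s ^ (-β) / (s ^ (2 β) + a)` with `β = α / 2 < 1`. After rescaling, its Taylor coefficients are
  those of `1 / (M (M ^ 2 + ε ^ 2))` with `M = (1 - X) ^ β`. Since `1 - M` has nonnegative
  coefficients and no constant term, the coefficients of `1 / M` dominate those of
  `M / (M ^ 2 + ε ^ 2)`, and the difference is `ε ^ 2` times the series in question. So all moments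
  of `e_τ` against `u ^ m e ^ (-d u)` are nonnegative, and `e_τ ≥ 0` follows since these weights
  concentrate at any given point (Post–Widder inversion, `nonneg_of_moments`).
* Decay (`exists_ml_decay`): `e_τ(t) = O(t ^ (η - 1))` whenever `η ≥ 0` and `η > τ - α`. This comes
  from Fourier inversion of the transform of `u e_τ(u)`, which is minus the derivative of
  `z ^ (α - τ) / (z ^ α + a)`, on the line `Re z = 1 / t`.
-/

open MeasureTheory Filter

/-- Riemann–Liouville fractional integral of order `σ` based at `0`:
`(₀I_t^σ f)(t) = (1/Γ(σ)) ∫₀ᵗ (t−s)^{σ−1} f(s) ds`. -/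
noncomputable def rlInt (σ : ℝ) (f : ℝ → ℝ) (t : ℝ) : ℝ :=
  (1 / Real.Gamma σ) * ∫ s in (0:ℝ)..t, (t - s) ^ (σ - 1) * f s

/-- The function whose second derivative is the (left) Caputo derivative of order `α ∈ (1,2]`:
for `α < 2` it is `₀I_t^{2−α}(w(s) − w'(0)·s − w(0))`, and for `α = 2` it is `w` itself. -/
noncomputable def capKernel (α : ℝ) (w : ℝ → ℝ) : ℝ → ℝ :=
  if α = 2 then w else rlInt (2 - α) (fun s => w s - deriv w 0 * s - w 0)

/-- Left Caputo fractional derivative of order `α ∈ (1,2]`: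
`(₀D_t^α w)(t) = (d²/dt²)[ ₀I_t^{2−α}(w(s) − w'(0)s − w(0)) ](t)` (second derivative of `w` when `α = 2`). -/
noncomputable def caputoD (α : ℝ) (w : ℝ → ℝ) : ℝ → ℝ :=
  deriv (deriv (capKernel α w))

/-- `g ∈ AC²([0,T])`: `g` is differentiable on `[0,T]`, its second derivative is integrable,
and `g'` is the integral of `g''` (i.e. `g'` is absolutely continuous). -/
def AC2On (g : ℝ → ℝ) (T : ℝ) : Prop :=
  (∀ t ∈ Set.Icc (0:ℝ) T, DifferentiableAt ℝ g t) ∧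
  IntervalIntegrable (deriv (deriv g)) volume 0 T ∧
  ∀ t ∈ Set.Icc (0:ℝ) T, deriv g t = deriv g 0 + ∫ s in (0:ℝ)..t, deriv (deriv g) s

/-! ### Nonnegative Taylor coefficients -/

/-- The `m`-th coefficient `x (x + 1) ⋯ (x + m - 1) / m!` of the binomial series `(1 - X) ^ (-x)`. -/
noncomputable def negBinCoeff (x : ℝ) (m : ℕ) : ℝ :=
  (∏ j ∈ Finset.range m, (x + j)) / (m.factorial : ℝ)

/-- The formal power series `(1 - X) ^ (-x)`. -/
noncomputable def negBin (x : ℝ) : PowerSeries ℝ := PowerSeries.mk (negBinCoeff x)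

lemma negBinCoeff_zero (x : ℝ) : negBinCoeff x 0 = 1 := by simp [negBinCoeff]

lemma negBinCoeff_succ (x : ℝ) (m : ℕ) :
    ((m : ℝ) + 1) * negBinCoeff x (m + 1) = (x + m) * negBinCoeff x m := by
  unfold negBinCoeff
  rw [Finset.prod_range_succ, Nat.factorial_succ]
  have : (m.factorial : ℝ) ≠ 0 := by exact_mod_cast m.factorial_ne_zero
  have h2 : (m : ℝ) + 1 ≠ 0 := by positivity
  push_cast
  field_simp

lemma negBinCoeff_unique (x : ℝ) (c : ℕ → ℝ) (h0 : c 0 = 1)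
    (hc : ∀ m : ℕ, ((m : ℝ) + 1) * c (m + 1) = (x + m) * c m) (m : ℕ) : c m = negBinCoeff x m := by
  induction m with
  | zero => rw [h0, negBinCoeff_zero]
  | succ m ih =>
    have h2 : (m : ℝ) + 1 ≠ 0 := by positivity
    apply mul_left_cancel₀ h2
    rw [hc, negBinCoeff_succ, ih]

/-- `(1 - X) ^ (-x)` solves `(1 - X) y' = x y`. -/
lemma negBin_deriv (x : ℝ) :
    (1 - PowerSeries.X) * PowerSeries.derivative ℝ (negBin x) = PowerSeries.C x * negBin x := by
  ext m
  rw [sub_mul, one_mul, map_sub, PowerSeries.coeff_C_mul, PowerSeries.coeff_derivative]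
  cases m with
  | zero =>
    have := negBinCoeff_succ x 0
    simp [negBin] at this ⊢
    simpa using this
  | succ m =>
    rw [PowerSeries.coeff_succ_X_mul, PowerSeries.coeff_derivative]
    have := negBinCoeff_succ x (m + 1)
    simp only [negBin, PowerSeries.coeff_mk]
    push_cast at this ⊢
    linarith

lemma negBin_add (x y : ℝ) : negBin (x + y) = negBin x * negBin y := by
  have hD : (1 - PowerSeries.X) * PowerSeries.derivative ℝ (negBin x * negBin y)
      = PowerSeries.C (x + y) * (negBin x * negBin y) := by
    rw [Derivation.leibniz, smul_eq_mul, smul_eq_mul, map_add]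
    linear_combination negBin x * negBin_deriv y + negBin y * negBin_deriv x
  ext m
  rw [negBin, PowerSeries.coeff_mk]
  symm
  apply negBinCoeff_unique (x + y) (fun m => PowerSeries.coeff m (negBin x * negBin y))
  · simp [negBin, PowerSeries.coeff_mul, negBinCoeff_zero]
  · intro m
    have := congrArg (PowerSeries.coeff m) hD
    rw [sub_mul, one_mul, map_sub, PowerSeries.coeff_C_mul, PowerSeries.coeff_derivative] at this
    cases m with
    | zero =>
      simp at this ⊢
      linarith
    | succ m =>
      rw [PowerSeries.coeff_succ_X_mul, PowerSeries.coeff_derivative] at this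
      push_cast at this ⊢
      linarith

lemma negBin_zero : negBin 0 = 1 := by
  ext m
  cases m with
  | zero => simp [negBin, negBinCoeff]
  | succ m =>
    rw [negBin, PowerSeries.coeff_mk, negBinCoeff, Finset.prod_range_succ']
    simp [PowerSeries.coeff_one]

/-- For `0 < β < 1` the series `1 - (1 - X) ^ β` has nonnegative coefficients. -/
lemma negBinCoeff_neg_nonpos {β : ℝ} (h0 : 0 < β) (h1 : β < 1) (m : ℕ) :
    negBinCoeff (-β) (m + 1) ≤ 0 := by
  unfold negBinCoeff
  apply div_nonpos_of_nonpos_of_nonneg _ (by positivity)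
  rw [Finset.prod_range_succ']
  apply mul_nonpos_of_nonneg_of_nonpos
  · apply Finset.prod_nonneg
    intro j _
    push_cast
    have : (0:ℝ) ≤ j := by positivity
    linarith
  · simp [h0.le]

lemma negBinCoeff_nonneg {x : ℝ} (hx : 0 ≤ x) (m : ℕ) : 0 ≤ negBinCoeff x m := by
  unfold negBinCoeff
  positivity

lemma summable_negBinCoeff {β ε : ℝ} (hβ : 0 < β) (hβ1 : β < 1) (hε : 0 < ε) (hε1 : ε < 1)
    (m : ℕ) : Summable (fun n : ℕ => (-1 : ℝ) ^ n * ε ^ (2 * n) * negBinCoeff (β * (2 * n + 3)) m) := by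
  have hs : Summable (fun n : ℕ => (m + 5 : ℝ) ^ m * (((n + 1 : ℕ) : ℝ) ^ m * (ε ^ 2) ^ (n + 1)) * (ε ^ 2)⁻¹) := by
    refine Summable.mul_right _ (Summable.mul_left _ ?_)
    have := summable_pow_mul_geometric_of_norm_lt_one (R := ℝ) m (r := ε ^ 2)
      (by rw [Real.norm_eq_abs, abs_of_pos (by positivity)]; nlinarith)
    exact (summable_nat_add_iff 1).2 this
  refine Summable.of_norm_bounded hs ?_
  intro n
  have hx : 0 ≤ β * (2 * n + 3) := by positivity
  rw [norm_mul, norm_mul, norm_pow, norm_neg, norm_one, one_pow, one_mul, Real.norm_eq_abs,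
    Real.norm_eq_abs, abs_of_pos (by positivity), abs_of_nonneg (negBinCoeff_nonneg hx m)]
  have h1 : negBinCoeff (β * (2 * n + 3)) m ≤ ((m + 5 : ℝ) * ((n + 1 : ℕ) : ℝ)) ^ m := by
    unfold negBinCoeff
    have hf : (1 : ℝ) ≤ m.factorial := by exact_mod_cast Nat.one_le_iff_ne_zero.2 m.factorial_ne_zero
    refine (div_le_self (by positivity) hf).trans ?_
    calc ∏ j ∈ Finset.range m, (β * (2 * n + 3) + j)
        ≤ ∏ j ∈ Finset.range m, ((m + 5 : ℝ) * ((n + 1 : ℕ) : ℝ)) := by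
          apply Finset.prod_le_prod
          · intro j _; positivity
          · intro j hj
            have hj' : (j : ℝ) ≤ m := by exact_mod_cast (Finset.mem_range.1 hj).le
            have hn : (0 : ℝ) ≤ n := by positivity
            have hm : (0 : ℝ) ≤ m := by positivity
            push_cast
            nlinarith [mul_nonneg hm hn]
      _ = _ := by simp
  calc ε ^ (2 * n) * negBinCoeff (β * (2 * n + 3)) m
      ≤ ε ^ (2 * n) * ((m + 5 : ℝ) * ((n + 1 : ℕ) : ℝ)) ^ m := by gcongr
    _ = _ := by
      rw [mul_pow, pow_succ (ε ^ 2), ← pow_mul]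
      field_simp

/-- If `M = 1 - J` where `J` has nonnegative coefficients and no constant term, then the
coefficients of `1 / M` dominate those of `M / (M ^ 2 + ε ^ 2) = Re (1 / (M - i ε))`. This is read
off from the recursions `(1 - i ε) u = 1 + J u` and `q = 1 + J q`, since `|1 - i ε| ≥ 1`. -/
lemma coeff_domination {J M Q R : PowerSeries ℝ} {ε : ℝ} (hM : M = 1 - J)
    (hJ0 : PowerSeries.coeff 0 J = 0) (hJ : ∀ m, 0 ≤ PowerSeries.coeff m J)
    (hQ : M * Q = 1) (hR : (M ^ 2 + PowerSeries.C (ε ^ 2)) * R = 1) (m : ℕ) :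
    PowerSeries.coeff m (M * R) ≤ PowerSeries.coeff m Q := by
  have key : ∀ m, ‖((PowerSeries.coeff m (M * R) : ℝ) : ℂ)
      + (ε * PowerSeries.coeff m R : ℝ) * Complex.I‖ ≤ PowerSeries.coeff m Q := by
    intro m
    induction m using Nat.strong_induction_on with
    | _ m ih =>
      have hQ' : Q = 1 + J * Q := by
        have : (1 - J) * Q = 1 := by rw [← hM]; exact hQ
        linear_combination this
      have hA : M * R + PowerSeries.C (ε ^ 2) * R = 1 + J * (M * R) := by
        have h2 : M * (M * R) + PowerSeries.C (ε ^ 2) * R = 1 := by linear_combination hR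
        have h3 : M * (M * R) = M * R - J * (M * R) := by rw [hM]; ring
        rw [h3] at h2
        linear_combination h2
      have hB : R - M * R = J * R := by rw [hM]; ring
      have cQ := congrArg (PowerSeries.coeff m) hQ'
      have cA := congrArg (PowerSeries.coeff m) hA
      have cB := congrArg (PowerSeries.coeff m) hB
      rw [map_add, PowerSeries.coeff_mul] at cQ
      rw [map_add, map_add, PowerSeries.coeff_C_mul, PowerSeries.coeff_mul m J] at cA
      rw [map_sub, PowerSeries.coeff_mul m J] at cB
      set u : ℕ → ℂ := fun m => ((PowerSeries.coeff m (M * R) : ℝ) : ℂ)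
        + (ε * PowerSeries.coeff m R : ℝ) * Complex.I with hu
      have hrec : (1 - ε * Complex.I) * u m = ((PowerSeries.coeff m (1 : PowerSeries ℝ) : ℝ) : ℂ)
          + ∑ x ∈ Finset.HasAntidiagonal.antidiagonal m, ((PowerSeries.coeff x.1 J : ℝ) : ℂ) * u x.2 := by
        have e1 : ∑ x ∈ Finset.HasAntidiagonal.antidiagonal m, ((PowerSeries.coeff x.1 J : ℝ) : ℂ) * u x.2
            = ((∑ x ∈ Finset.HasAntidiagonal.antidiagonal m, PowerSeries.coeff x.1 J * PowerSeries.coeff x.2 (M * R) : ℝ) : ℂ)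
             + ((ε * ∑ x ∈ Finset.HasAntidiagonal.antidiagonal m, PowerSeries.coeff x.1 J * PowerSeries.coeff x.2 R : ℝ) : ℂ)
              * Complex.I := by
          push_cast
          rw [Finset.mul_sum, Finset.sum_mul, ← Finset.sum_add_distrib]
          refine Finset.sum_congr rfl fun x _ => ?_
          simp only [hu]
          push_cast
          ring
        rw [e1, ← cB]
        have cA' := congrArg (fun r : ℝ => (r : ℂ)) cA
        simp only [hu]
        push_cast at cA' ⊢
        linear_combination cA' - (ε : ℂ) ^ 2 * ((PowerSeries.coeff m R : ℝ) : ℂ) * Complex.I_sq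
      have hn1 : 1 ≤ ‖(1 - ε * Complex.I : ℂ)‖ := by
        have := Complex.abs_re_le_norm (1 - ε * Complex.I : ℂ)
        simpa using this
      have h1 : 0 ≤ PowerSeries.coeff m (1 : PowerSeries ℝ) := by
        rw [PowerSeries.coeff_one]; split_ifs <;> norm_num
      calc ‖u m‖ ≤ ‖(1 - ε * Complex.I : ℂ)‖ * ‖u m‖ := le_mul_of_one_le_left (norm_nonneg _) hn1
        _ = ‖(1 - ε * Complex.I) * u m‖ := (norm_mul _ _).symm
        _ ≤ PowerSeries.coeff m (1 : PowerSeries ℝ)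
            + ∑ x ∈ Finset.HasAntidiagonal.antidiagonal m, PowerSeries.coeff x.1 J * PowerSeries.coeff x.2 Q := by
          rw [hrec]
          refine (norm_add_le _ _).trans (add_le_add ?_ ((norm_sum_le _ _).trans ?_))
          · rw [Complex.norm_real, Real.norm_eq_abs, abs_of_nonneg h1]
          · refine Finset.sum_le_sum fun x hx => ?_
            rw [norm_mul, Complex.norm_real, Real.norm_eq_abs, abs_of_nonneg (hJ _)]
            by_cases hx1 : x.1 = 0
            · rw [hx1, hJ0]; simp
            · have hlt : x.2 < m := by
                have := Finset.HasAntidiagonal.mem_antidiagonal.1 hx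
                omega
              exact mul_le_mul_of_nonneg_left (ih _ hlt) (hJ _)
        _ = PowerSeries.coeff m Q := cQ.symm
  refine le_trans ?_ (key m)
  have := Complex.re_le_norm (((PowerSeries.coeff m (M * R) : ℝ) : ℂ)
      + (ε * PowerSeries.coeff m R : ℝ) * Complex.I)
  simpa using this

open scoped PowerSeries.WithPiTopology in
/-- The Taylor coefficients of `(1 - X) ^ (-β) / ((1 - X) ^ (2 β) + ε ^ 2)`, expanded in powers of
`ε ^ 2`, are nonnegative. -/
lemma tsum_negBinCoeff_nonneg {β ε : ℝ} (hβ : 0 < β) (hβ1 : β < 1) (hε : 0 < ε) (hε1 : ε < 1)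
    (m : ℕ) : 0 ≤ ∑' n : ℕ, (-1 : ℝ) ^ n * ε ^ (2 * n) * negBinCoeff (β * (2 * n + 3)) m := by
  set S : PowerSeries ℝ := PowerSeries.mk fun m =>
    ∑' n : ℕ, (-1 : ℝ) ^ n * ε ^ (2 * n) * negBinCoeff (β * (2 * n + 3)) m with hS
  have hsum : HasSum (fun n : ℕ => PowerSeries.C ((-1 : ℝ) ^ n * ε ^ (2 * n))
      * negBin (β * (2 * n + 3))) S := by
    rw [PowerSeries.WithPiTopology.hasSum_iff_hasSum_coeff]
    intro d
    simp only [PowerSeries.coeff_C_mul, negBin, PowerSeries.coeff_mk, hS]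
    exact (summable_negBinCoeff hβ hβ1 hε hε1 d).hasSum
  set M := negBin (-β) with hM
  have hM2 : M ^ 2 = negBin (-β + -β) := by rw [negBin_add, sq]
  have h3 : HasSum (fun n : ℕ => PowerSeries.C ((-1 : ℝ) ^ n * ε ^ (2 * n))
      * negBin (β * (2 * n))) (M * M ^ 2 * S) := by
    convert! hsum.mul_left (M * M ^ 2) using 2 with n
    have : negBin (β * (2 * n)) = M * M ^ 2 * negBin (β * (2 * n + 3)) := by
      rw [hM2, hM, ← negBin_add, ← negBin_add]; congr 1; ring
    rw [this]; ring
  have h1 : HasSum (fun n : ℕ => - (PowerSeries.C ((-1 : ℝ) ^ (n + 1) * ε ^ (2 * (n + 1)))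
      * negBin (β * (2 * ((n + 1 : ℕ) : ℝ))))) (PowerSeries.C (ε ^ 2) * M * S) := by
    convert! hsum.mul_left (PowerSeries.C (ε ^ 2) * M) using 2 with n
    have : negBin (β * (2 * ((n + 1 : ℕ) : ℝ))) = M * negBin (β * (2 * n + 3)) := by
      rw [hM, ← negBin_add]; congr 1; push_cast; ring
    have h2 : PowerSeries.C ((-1 : ℝ) ^ (n + 1) * ε ^ (2 * (n + 1)))
      = - (PowerSeries.C (ε ^ 2) * PowerSeries.C ((-1 : ℝ) ^ n * ε ^ (2 * n))) := by
      rw [← map_mul, ← map_neg]; congr 1; ring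
    rw [this, h2]; ring
  have h3' := (hasSum_nat_add_iff' 1).2 h3
  simp only [Finset.range_one, Finset.sum_singleton] at h3'
  have hid : M * M ^ 2 * S + PowerSeries.C (ε ^ 2) * M * S = 1 := by
    have := h3'.neg.unique h1
    simp [negBin_zero] at this
    rw [map_pow]
    linear_combination -this
  have hQ : M * negBin β = 1 := by rw [hM, ← negBin_add, neg_add_cancel, negBin_zero]
  have hR : (M ^ 2 + PowerSeries.C (ε ^ 2)) * (M * S) = 1 := by linear_combination hid
  have hdom := coeff_domination (J := 1 - M) (M := M) (by ring)
    (by simp [hM, negBin, negBinCoeff_zero])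
    (by
      intro m
      cases m with
      | zero => simp [hM, negBin, negBinCoeff_zero]
      | succ m =>
        rw [map_sub, hM, negBin, PowerSeries.coeff_mk, PowerSeries.coeff_one]
        have := negBinCoeff_neg_nonpos hβ hβ1 m
        simpa using this) hQ hR m
  have hfin : PowerSeries.C (ε ^ 2) * S = negBin β - M * (M * S) := by
    have : negBin β * (M * M ^ 2 * S + PowerSeries.C (ε ^ 2) * M * S) = negBin β := by
      rw [hid, mul_one]
    linear_combination this - (M ^ 2 * S + PowerSeries.C (ε ^ 2) * S) * hQ
  have hc := congrArg (PowerSeries.coeff m) hfin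
  rw [PowerSeries.coeff_C_mul, map_sub] at hc
  have : PowerSeries.coeff m S = ∑' n : ℕ, (-1 : ℝ) ^ n * ε ^ (2 * n)
      * negBinCoeff (β * (2 * n + 3)) m := by rw [hS, PowerSeries.coeff_mk]
  rw [← this]
  by_contra hneg
  push Not at hneg
  have : ε ^ 2 * PowerSeries.coeff m S < 0 := mul_neg_of_pos_of_neg (by positivity) hneg
  linarith

/-! ### Power kernels and Mittag-Leffler kernels -/

/-- The Riemann–Liouville kernel `t ^ (τ - 1) / Γ(τ)`. -/
noncomputable def pw (τ t : ℝ) : ℝ := t ^ (τ - 1) / Real.Gamma τ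

/-- The power series `∑ₙ (-a x)ⁿ / Γ(α n + τ)`, that is, `E_{α,τ}(-a x)`. -/
noncomputable def mlSer (α a τ x : ℝ) : ℝ := ∑' n : ℕ, (-a * x) ^ n / Real.Gamma (α * n + τ)

/-- The Mittag-Leffler kernel `t ^ (τ - 1) E_{α,τ}(-a t ^ α)`, whose Laplace transform is
`λ ^ (α - τ) / (λ ^ α + a)`. -/
noncomputable def ml (α a τ t : ℝ) : ℝ := t ^ (τ - 1) * mlSer α a τ (t ^ α)

lemma summable_mlSer {α : ℝ} (hα : 1 < α) (τ y : ℝ) :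
    Summable (fun n : ℕ => y ^ n / Real.Gamma (α * n + τ)) := by
  refine Summable.of_norm_bounded_eventually_nat (Real.summable_pow_div_factorial |y|) ?_
  obtain ⟨N, hN⟩ := exists_nat_gt ((1 - τ) / (α - 1))
  filter_upwards [eventually_ge_atTop (N + 1)] with n hn
  have hn1 : (1 : ℝ) ≤ n := by exact_mod_cast (by omega : 1 ≤ n)
  have hnN : (N : ℝ) ≤ n := by exact_mod_cast (by omega : N ≤ n)
  have h1 : (n : ℝ) + 1 ≤ α * n + τ := by
    rw [div_lt_iff₀ (by linarith)] at hN
    nlinarith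
  have h2 : (n.factorial : ℝ) ≤ Real.Gamma (α * n + τ) := by
    rw [← Real.Gamma_nat_eq_factorial]
    exact Real.Gamma_strictMonoOn_Ici.monotoneOn (Set.mem_Ici.2 (by linarith))
      (Set.mem_Ici.2 (by linarith)) h1
  have h3 : (0 : ℝ) < n.factorial := by exact_mod_cast n.factorial_pos
  rw [norm_div, norm_pow, Real.norm_eq_abs, Real.norm_eq_abs, abs_of_pos (h3.trans_le h2)]
  gcongr

lemma gamma_ml_pos {α τ : ℝ} (hα : 1 < α) (hτ : 0 < τ) (n : ℕ) : 0 < Real.Gamma (α * n + τ) := by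
  apply Real.Gamma_pos_of_pos
  positivity

lemma continuous_mlSer {α a τ : ℝ} (hα : 1 < α) (hτ : 0 < τ) : Continuous (mlSer α a τ) := by
  rw [continuous_iff_continuousAt]
  intro x
  have hon : ContinuousOn (mlSer α a τ) (Metric.ball 0 (|x| + 1)) := by
    unfold mlSer
    refine continuousOn_tsum (u := fun n : ℕ => (|a| * (|x| + 1)) ^ n / Real.Gamma (α * n + τ))
      (fun n => by fun_prop) (summable_mlSer hα τ _) ?_
    intro n y hy
    have hy' : |y| ≤ |x| + 1 := by simpa using (Metric.mem_ball.1 hy).le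
    rw [norm_div, norm_pow, norm_mul, norm_neg, Real.norm_eq_abs, Real.norm_eq_abs,
      Real.norm_eq_abs, abs_of_pos (gamma_ml_pos hα hτ n)]
    have := gamma_ml_pos hα hτ n
    gcongr
  exact hon.continuousAt (Metric.isOpen_ball.mem_nhds (by simp))

lemma pw_nonneg {τ t : ℝ} (hτ : 0 < τ) (ht : 0 ≤ t) : 0 ≤ pw τ t :=
  div_nonneg (Real.rpow_nonneg ht _) (Real.Gamma_pos_of_pos hτ).le

lemma pw_pos {τ t : ℝ} (hτ : 0 < τ) (ht : 0 < t) : 0 < pw τ t :=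
  div_pos (Real.rpow_pos_of_pos ht _) (Real.Gamma_pos_of_pos hτ)

lemma ml_term {α a τ t : ℝ} (ht : 0 < t) (n : ℕ) :
    t ^ (τ - 1) * ((-a * t ^ α) ^ n / Real.Gamma (α * n + τ)) = (-a) ^ n * pw (α * n + τ) t := by
  have h : t ^ (α * n + τ - 1) = t ^ (τ - 1) * (t ^ α) ^ n := by
    rw [← Real.rpow_natCast (t ^ α) n, ← Real.rpow_mul ht.le, ← Real.rpow_add ht]
    congr 1; ring
  rw [pw, h, mul_pow]
  ring

lemma hasSum_ml {α a τ t : ℝ} (hα : 1 < α) (hτ : 0 < τ) (ht : 0 < t) :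
    HasSum (fun n : ℕ => (-a) ^ n * pw (α * n + τ) t) (ml α a τ t) := by
  have := (summable_mlSer hα τ (-a * t ^ α)).hasSum.mul_left (t ^ (τ - 1))
  simp_rw [ml_term ht] at this
  exact this

lemma ml_rec {α a τ t : ℝ} (hα : 1 < α) (hτ : 0 < τ) (ht : 0 < t) :
    ml α a τ t = pw τ t - a * ml α a (τ + α) t := by
  have h1 := (hasSum_nat_add_iff' 1).2 (hasSum_ml (a := a) hα hτ ht)
  have h2 := (hasSum_ml (a := a) hα (by linarith : 0 < τ + α) ht).mul_left (-a)
  have h3 : (fun n : ℕ => -a * ((-a) ^ n * pw (α * n + (τ + α)) t))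
      = fun n : ℕ => (-a) ^ (n + 1) * pw (α * ((n + 1 : ℕ) : ℝ) + τ) t := by
    funext n
    rw [show α * ((n + 1 : ℕ) : ℝ) + τ = α * n + (τ + α) by push_cast; ring]
    ring
  rw [h3] at h2
  have := h1.unique h2
  simp at this
  linarith

lemma intervalIntegrable_pw {τ : ℝ} (hτ : 0 < τ) (s t : ℝ) :
    IntervalIntegrable (pw τ) volume s t :=
  (intervalIntegral.intervalIntegrable_rpow' (by linarith)).div_const _

lemma intervalIntegrable_ml {α a τ : ℝ} (hα : 1 < α) (hτ : 0 < τ) (s t : ℝ) :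
    IntervalIntegrable (ml α a τ) volume s t := by
  refine IntervalIntegrable.mul_continuousOn
    (intervalIntegral.intervalIntegrable_rpow' (by linarith)) ?_
  apply Continuous.continuousOn
  exact (continuous_mlSer hα hτ).comp (Real.continuous_rpow_const (by linarith))

lemma continuousOn_ml {α a τ : ℝ} (hα : 1 < α) (hτ : 0 < τ) :
    ContinuousOn (ml α a τ) (Set.Ioi 0) := by
  refine ContinuousOn.mul ?_ ?_
  · exact fun x hx => (Real.continuousAt_rpow_const _ _ (Or.inl (ne_of_gt hx))).continuousWithinAt
  · exact ((continuous_mlSer hα hτ).comp (Real.continuous_rpow_const (by linarith))).continuousOn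

/-- Euler's Beta integral as the semigroup law of the Riemann–Liouville kernels. -/
lemma integral_pw_pw {s y t : ℝ} (hs : 0 < s) (hy : 0 < y) (ht : 0 < t) :
    ∫ u in (0:ℝ)..t, pw s (t - u) * pw y u = pw (s + y) t := by
  have h1 := Complex.betaIntegral_scaled (y : ℂ) (s : ℂ) ht
  have h2 := Complex.Gamma_mul_Gamma_eq_betaIntegral (s := (y : ℂ)) (t := (s : ℂ))
    (by simpa using hy) (by simpa using hs)
  have h3 : ∫ u in (0:ℝ)..t, (u : ℂ) ^ ((y : ℂ) - 1) * ((t : ℂ) - u) ^ ((s : ℂ) - 1)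
      = ((∫ u in (0:ℝ)..t, u ^ (y - 1) * (t - u) ^ (s - 1) : ℝ) : ℂ) := by
    rw [← intervalIntegral.integral_ofReal]
    apply intervalIntegral.integral_congr
    intro u hu
    rw [Set.uIcc_of_le ht.le] at hu
    have hu1 : 0 ≤ t - u := by linarith [hu.2]
    simp only
    push_cast
    rw [Complex.ofReal_cpow hu.1, ← Complex.ofReal_sub t u, Complex.ofReal_cpow hu1]
    push_cast
    rfl
  have hG : Real.Gamma (y + s) * (∫ u in (0:ℝ)..t, u ^ (y - 1) * (t - u) ^ (s - 1))
      = t ^ (y + s - 1) * (Real.Gamma y * Real.Gamma s) := by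
    have : (Real.Gamma (y + s) : ℂ) * ((∫ u in (0:ℝ)..t, u ^ (y - 1) * (t - u) ^ (s - 1) : ℝ) : ℂ)
      = ((t ^ (y + s - 1) : ℝ) : ℂ) * ((Real.Gamma y : ℂ) * (Real.Gamma s : ℂ)) := by
      rw [← h3, h1, Complex.ofReal_cpow ht.le, ← Complex.Gamma_ofReal, ← Complex.Gamma_ofReal,
        ← Complex.Gamma_ofReal, h2]
      push_cast
      ring
    exact_mod_cast this
  have gy := (Real.Gamma_pos_of_pos hy).ne'
  have gs := (Real.Gamma_pos_of_pos hs).ne'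
  have gys := (Real.Gamma_pos_of_pos (add_pos hy hs)).ne'
  have h4 : ∫ u in (0:ℝ)..t, pw s (t - u) * pw y u
      = (1 / (Real.Gamma y * Real.Gamma s))
        * ∫ u in (0:ℝ)..t, u ^ (y - 1) * (t - u) ^ (s - 1) := by
    rw [← intervalIntegral.integral_const_mul]
    congr 1
    funext u
    unfold pw
    field_simp
  rw [h4, pw, add_comm s y]
  field_simp
  linarith

lemma intervalIntegrable_pw_pw {s y t : ℝ} (hs : 0 < s) (hy : 0 < y) (ht : 0 < t) :
    IntervalIntegrable (fun u => pw s (t - u) * pw y u) volume 0 t := by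
  by_contra h
  have h1 := intervalIntegral.integral_undef h
  rw [integral_pw_pw hs hy ht] at h1
  exact (pw_pos (add_pos hs hy) ht).ne' h1

lemma integral_pw_ml {α a s τ t : ℝ} (hα : 1 < α) (hs : 0 < s) (hτ : 0 < τ) (ht : 0 < t) :
    ∫ u in (0:ℝ)..t, pw s (t - u) * ml α a τ u = ml α a (s + τ) t := by
  have hτn : ∀ n : ℕ, 0 < α * n + τ := fun n => by positivity
  have hFint : ∀ n : ℕ, Integrable (fun u => (-a) ^ n * (pw s (t - u) * pw (α * n + τ) u))
      (volume.restrict (Set.Ioc 0 t)) := fun n =>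
    ((intervalIntegrable_iff_integrableOn_Ioc_of_le ht.le).1
      (intervalIntegrable_pw_pw hs (hτn n) ht)).const_mul _
  have hI : ∀ n : ℕ, ∫ u in Set.Ioc 0 t, pw s (t - u) * pw (α * n + τ) u
      = pw (α * n + (s + τ)) t := fun n => by
    rw [← intervalIntegral.integral_of_le ht.le, integral_pw_pw hs (hτn n) ht]
    congr 1; ring
  have hnorm : ∀ n : ℕ, ∫ u in Set.Ioc 0 t, ‖(-a) ^ n * (pw s (t - u) * pw (α * n + τ) u)‖
      = (- -|a|) ^ n * pw (α * n + (s + τ)) t := fun n => by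
    rw [← hI, ← integral_const_mul]
    apply setIntegral_congr_fun measurableSet_Ioc
    intro u hu
    have h1 : 0 ≤ pw s (t - u) := pw_nonneg hs (by linarith [hu.2])
    have h2 : 0 ≤ pw (α * n + τ) u := pw_nonneg (hτn n) hu.1.le
    simp only [norm_mul, norm_pow, norm_neg, Real.norm_eq_abs, abs_of_nonneg h1, abs_of_nonneg h2,
      neg_neg]
  have hsum := hasSum_integral_of_summable_integral_norm hFint (by
    simp_rw [hnorm]
    exact (hasSum_ml hα (by positivity) ht).summable)
  have e1 : ∫ u in (0:ℝ)..t, pw s (t - u) * ml α a τ u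
      = ∫ u in Set.Ioc 0 t, ∑' n : ℕ, (-a) ^ n * (pw s (t - u) * pw (α * n + τ) u) := by
    rw [intervalIntegral.integral_of_le ht.le]
    apply setIntegral_congr_fun measurableSet_Ioc
    intro u hu
    have := ((hasSum_ml (a := a) hα hτ hu.1).mul_left (pw s (t - u))).tsum_eq
    simp only
    rw [← this]
    congr 1
    funext n
    ring
  rw [e1]
  refine hsum.unique ?_
  simp_rw [integral_const_mul, hI]
  exact hasSum_ml hα (by positivity) ht

/-! ### Positivity of the kernels -/

/-- The profile `u ↦ (u / x) exp (1 - u / x)` of the weights used in the Post–Widder inversion; it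
has its unique maximum `1` at `u = x`. -/
noncomputable def bump (x u : ℝ) : ℝ := u / x * Real.exp (1 - u / x)

lemma bump_le_one {x u : ℝ} : bump x u ≤ 1 := by
  have h := Real.add_one_le_exp (u / x - 1)
  have h2 : bump x u = u / x / Real.exp (u / x - 1) := by
    rw [bump, show 1 - u / x = -(u / x - 1) by ring, Real.exp_neg]; rfl
  rw [h2, div_le_one (Real.exp_pos _)]
  linarith

lemma mul_exp_le_right {ρ v : ℝ} (hρ : 0 < ρ) (hv : 1 + ρ ≤ v) :
    v * Real.exp (1 - v) ≤ (1 + ρ) * Real.exp (-ρ) := by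
  have h := Real.add_one_le_exp (v - (1 + ρ))
  have h1 : v ≤ (1 + ρ) * Real.exp (v - (1 + ρ)) := by nlinarith
  calc v * Real.exp (1 - v) ≤ ((1 + ρ) * Real.exp (v - (1 + ρ))) * Real.exp (1 - v) := by gcongr
    _ = (1 + ρ) * Real.exp (-ρ) := by rw [mul_assoc, ← Real.exp_add]; congr 2; ring

lemma mul_exp_le_left {ρ v : ℝ} (hρ : 0 < ρ) (hρ1 : ρ < 1) (hv : v ≤ 1 - ρ) :
    v * Real.exp (1 - v) ≤ (1 - ρ) * Real.exp ρ := by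
  have h := Real.add_one_le_exp ((v - (1 - ρ)) / (1 - ρ))
  have h0 : 0 < 1 - ρ := by linarith
  have h1 : v ≤ (1 - ρ) * Real.exp ((v - (1 - ρ)) / (1 - ρ)) := by
    have := mul_le_mul_of_nonneg_left h h0.le
    have e : (1 - ρ) * ((v - (1 - ρ)) / (1 - ρ) + 1) = v := by field_simp; ring
    linarith
  have h2 : (v - (1 - ρ)) / (1 - ρ) ≤ v - (1 - ρ) := by
    rw [div_le_iff₀ h0]
    nlinarith
  have h3 : v ≤ (1 - ρ) * Real.exp (v - (1 - ρ)) :=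
    h1.trans (mul_le_mul_of_nonneg_left (Real.exp_le_exp.2 h2) h0.le)
  calc v * Real.exp (1 - v) ≤ ((1 - ρ) * Real.exp (v - (1 - ρ))) * Real.exp (1 - v) := by gcongr
    _ = (1 - ρ) * Real.exp ρ := by rw [mul_assoc, ← Real.exp_add]; congr 2; ring

lemma exists_bump_bound {x r : ℝ} (hx : 0 < x) (hr : 0 < r) (hrx : r < x) :
    ∃ q, 0 < q ∧ q < 1 ∧ ∀ u, r ≤ |u - x| → bump x u ≤ q := by
  set ρ := r / x with hρ
  have hρ0 : 0 < ρ := by positivity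
  have hρ1 : ρ < 1 := by rw [hρ, div_lt_one hx]; exact hrx
  refine ⟨max ((1 + ρ) * Real.exp (-ρ)) ((1 - ρ) * Real.exp ρ), ?_, ?_, ?_⟩
  · exact lt_max_of_lt_left (by positivity)
  · apply max_lt
    · have h := Real.add_one_lt_exp hρ0.ne'
      rw [Real.exp_neg, ← div_eq_mul_inv, div_lt_one (Real.exp_pos _)]
      linarith
    · have h := Real.add_one_lt_exp (neg_ne_zero.2 hρ0.ne')
      rw [Real.exp_neg] at h
      have h2 : (1 - ρ) < (Real.exp ρ)⁻¹ := by linarith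
      calc (1 - ρ) * Real.exp ρ < (Real.exp ρ)⁻¹ * Real.exp ρ := by gcongr
        _ = 1 := inv_mul_cancel₀ (Real.exp_pos _).ne'
  · intro u hu
    rcases le_abs.1 hu with h | h
    · refine le_max_of_le_left (mul_exp_le_right hρ0 ?_)
      rw [hρ, le_div_iff₀ hx, add_mul, div_mul_cancel₀ _ hx.ne']
      linarith
    · refine le_max_of_le_right (mul_exp_le_left hρ0 hρ1 ?_)
      rw [hρ, div_le_iff₀ hx, sub_mul, div_mul_cancel₀ _ hx.ne']
      linarith

/-- A continuous integrable function on `(0, ∞)` whose integrals against all powers of `bump x` are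
nonnegative is nonnegative at `x`, because these powers concentrate at `x`. -/
lemma nonneg_of_moments {g : ℝ → ℝ} {x : ℝ} (hx : 0 < x) (hc : ContinuousOn g (Set.Ioi 0))
    (hi : IntegrableOn g (Set.Ioi 0))
    (hm : ∀ n : ℕ, 0 ≤ ∫ u in Set.Ioi 0, bump x u ^ n * g u) : 0 ≤ g x := by
  by_contra hneg
  push Not at hneg
  set δ := -g x / 2 with hδ
  have hδ0 : 0 < δ := by linarith
  have hgx : ContinuousAt g x := hc.continuousAt (Ioi_mem_nhds hx)
  have hev : ∀ᶠ u in nhds x, g u < -δ := hgx.eventually_lt continuousAt_const (by linarith)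
  obtain ⟨r0, hr0, hr0'⟩ := Metric.eventually_nhds_iff.1 hev
  set r := min r0 (x / 2) with hr
  have hrpos : 0 < r := by positivity
  have hrx : r < x := (min_le_right _ _).trans_lt (by linarith)
  obtain ⟨q, hq0, hq1, hq⟩ := exists_bump_bound hx hrpos hrx
  have hbc : Continuous (bump x) := by unfold bump; fun_prop
  have hb1 : bump x x = 1 := by simp [bump, hx.ne']
  have hev2 : ∀ᶠ u in nhds x, (1 + q) / 2 < bump x u :=
    continuousAt_const.eventually_lt hbc.continuousAt (by rw [hb1]; linarith)
  obtain ⟨s0, hs0, hs0'⟩ := Metric.eventually_nhds_iff.1 hev2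
  set s := min (s0 / 2) (r / 2) with hs
  have hspos : 0 < s := by positivity
  have hss : s < s0 := (min_le_left _ _).trans_lt (by linarith)
  have hsr : s < r := (min_le_right _ _).trans_lt (by linarith)
  set A := Set.Icc (x - s) (x + s) with hA
  have hAI : A ⊆ Set.Ioi 0 := fun u hu => by
    have := hu.1
    simp only [Set.mem_Ioi]
    linarith
  have hb0 : ∀ u ∈ Set.Ioi (0:ℝ), 0 ≤ bump x u := fun u hu => by
    have : (0:ℝ) < u := hu
    unfold bump; positivity
  set Gt := ∫ u in Set.Ioi (0:ℝ), |g u| with hGt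
  have hbound : ∀ n : ℕ, 0 ≤ q ^ n * Gt - δ * ((1 + q) / 2) ^ n * (2 * s) := by
    intro n
    refine (hm n).trans ?_
    have hint1 : IntegrableOn (fun u => q ^ n * |g u|) (Set.Ioi 0) := hi.abs.const_mul _
    have hint2 : IntegrableOn (A.indicator fun _ => δ * ((1 + q) / 2) ^ n) (Set.Ioi 0) := by
      apply Integrable.integrableOn
      rw [integrable_indicator_iff measurableSet_Icc]
      exact continuous_const.integrableOn_Icc
    have hval : ∫ u in Set.Ioi (0:ℝ), (q ^ n * |g u| - A.indicator (fun _ => δ * ((1 + q) / 2) ^ n) u)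
        = q ^ n * Gt - δ * ((1 + q) / 2) ^ n * (2 * s) := by
      rw [integral_sub hint1 hint2, integral_const_mul, setIntegral_indicator measurableSet_Icc,
        Set.inter_eq_right.2 hAI, setIntegral_const, hA, smul_eq_mul, Real.volume_real_Icc_of_le (by linarith)]
      ring
    rw [← hval]
    apply setIntegral_mono_on _ (hint1.sub hint2) measurableSet_Ioi
    · intro u hu
      rw [Pi.sub_apply]
      have hbn : 0 ≤ bump x u ^ n := pow_nonneg (hb0 u hu) n
      by_cases huA : u ∈ A
      · rw [Set.indicator_of_mem huA]
        have hd : dist u x ≤ s := by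
          rw [Real.dist_eq, abs_le]; constructor <;> linarith [huA.1, huA.2]
        have h1 : g u < -δ := hr0' ((hd.trans_lt hsr).trans_le (min_le_left _ _))
        have h2 : (1 + q) / 2 < bump x u := hs0' (hd.trans_lt hss)
        have h3 : ((1 + q) / 2) ^ n ≤ bump x u ^ n := by gcongr
        have h4 : 0 ≤ q ^ n * |g u| := by positivity
        nlinarith
      · rw [Set.indicator_of_notMem huA, sub_zero]
        by_cases hur : r ≤ |u - x|
        · calc bump x u ^ n * g u ≤ bump x u ^ n * |g u| := by gcongr; exact le_abs_self _
            _ ≤ q ^ n * |g u| := by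
              gcongr
              · exact hb0 u hu
              · exact hq u hur
        · push Not at hur
          have h1 : g u < -δ := hr0' (by rw [Real.dist_eq]; exact hur.trans_le (min_le_left _ _))
          have h4 : 0 ≤ q ^ n * |g u| := by positivity
          nlinarith
    · refine hi.bdd_mul (c := 1) ((hbc.pow n).aestronglyMeasurable) ?_
      filter_upwards [ae_restrict_mem measurableSet_Ioi] with u hu
      rw [norm_pow, Real.norm_eq_abs, abs_of_nonneg (hb0 u hu)]
      exact pow_le_one₀ (hb0 u hu) bump_le_one
  have hQ : 0 < (1 + q) / 2 := by linarith
  have hlim : Tendsto (fun n : ℕ => (q / ((1 + q) / 2)) ^ n * Gt) atTop (nhds 0) := by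
    have := (tendsto_pow_atTop_nhds_zero_of_lt_one (r := q / ((1 + q) / 2)) (by positivity)
      (by rw [div_lt_one hQ]; linarith)).mul_const Gt
    simpa using this
  have hev3 := hlim.eventually (gt_mem_nhds (show (0:ℝ) < δ * (2 * s) by positivity))
  obtain ⟨n, hn⟩ := hev3.exists
  have h5 := hbound n
  rw [div_pow, div_mul_eq_mul_div, div_lt_iff₀ (by positivity)] at hn
  linarith

lemma gamma_add_nat {x : ℝ} (hx : 0 < x) (m : ℕ) :
    Real.Gamma (x + m) = Real.Gamma x * ((m.factorial : ℝ) * negBinCoeff x m) := by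
  induction m with
  | zero => simp [negBinCoeff_zero]
  | succ m ih =>
    have hm : x + m ≠ 0 := by positivity
    rw [Nat.cast_succ, ← add_assoc, Real.Gamma_add_one hm, ih, Nat.factorial_succ]
    have := negBinCoeff_succ x m
    push_cast
    linear_combination -(Real.Gamma x * (m.factorial : ℝ)) * this

lemma integral_moment_pw {c x : ℝ} (hc : 0 < c) (hx : 0 < x) (m : ℕ) :
    ∫ u in Set.Ioi (0:ℝ), u ^ m * Real.exp (-(c * u)) * pw x u
      = (1 / c) ^ (x + m) * ((m.factorial : ℝ) * negBinCoeff x m) := by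
  have h := Real.integral_rpow_mul_exp_neg_mul_Ioi (a := x + m) (by positivity) hc
  rw [gamma_add_nat hx] at h
  have g := (Real.Gamma_pos_of_pos hx).ne'
  have e : ∫ u in Set.Ioi (0:ℝ), u ^ m * Real.exp (-(c * u)) * pw x u
      = (1 / Real.Gamma x) * ∫ u in Set.Ioi (0:ℝ), u ^ (x + m - 1) * Real.exp (-(c * u)) := by
    rw [← integral_const_mul]
    apply setIntegral_congr_fun measurableSet_Ioi
    intro u hu
    have : u ^ (x + m - 1) = u ^ (x - 1) * u ^ m := by
      rw [← Real.rpow_natCast u m, ← Real.rpow_add hu]; congr 1; ring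
    simp only [pw]
    rw [this]
    field_simp
  rw [e, h]
  field_simp

/-- Term-by-term moments `∫ u ^ m e ^ (-c u) (·) du` of the critical kernel `τ = 3 α / 2`. -/
lemma hasSum_moment_ml {α a c : ℝ} (hα : 1 < α) (hα2 : α < 2) (ha : a ≠ 0) (hc : 0 < c)
    (hac : |a| < c ^ α) (m : ℕ) :
    HasSum (fun n : ℕ => (-a) ^ n * ((1 / c) ^ (α * n + 3 * (α / 2) + m)
        * ((m.factorial : ℝ) * negBinCoeff (α * n + 3 * (α / 2)) m)))
      (∫ u in Set.Ioi (0:ℝ), u ^ m * Real.exp (-(c * u)) * ml α a (3 * (α / 2)) u) ∧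
    ∀ n : ℕ, |a| ^ n * ((1 / c) ^ (α * n + 3 * (α / 2) + m)
        * ((m.factorial : ℝ) * negBinCoeff (α * n + 3 * (α / 2)) m))
      = (1 / c) ^ (3 * (α / 2) + m) * (m.factorial : ℝ) * ((Real.sqrt (|a| / c ^ α)) ^ (2 * n)
        * negBinCoeff (α / 2 * (2 * n + 3)) m) := by
  have hxn : ∀ n : ℕ, 0 < α * n + 3 * (α / 2) := fun n => by positivity
  have hcα : 0 < c ^ α := by positivity
  have hterm : ∀ n : ℕ, |a| ^ n * ((1 / c) ^ (α * n + 3 * (α / 2) + m)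
        * ((m.factorial : ℝ) * negBinCoeff (α * n + 3 * (α / 2)) m))
      = (1 / c) ^ (3 * (α / 2) + m) * (m.factorial : ℝ) * ((Real.sqrt (|a| / c ^ α)) ^ (2 * n)
        * negBinCoeff (α / 2 * (2 * n + 3)) m) := by
    intro n
    have h1 : (1 / c) ^ (α * n + 3 * (α / 2) + m)
        = (1 / c) ^ (3 * (α / 2) + m) * (1 / c ^ α) ^ n := by
      have h0 : (1 / c) ^ α = 1 / c ^ α := by
        rw [Real.div_rpow (by norm_num) hc.le, Real.one_rpow]
      rw [show α * n + 3 * (α / 2) + m = (3 * (α / 2) + m) + α * n by ring,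
        Real.rpow_add (by positivity), Real.rpow_mul (by positivity), Real.rpow_natCast, h0]
    rw [h1, pow_mul, Real.sq_sqrt (by positivity),
      show α / 2 * (2 * n + 3) = α * n + 3 * (α / 2) by ring, div_pow, div_pow, one_pow]
    ring
  refine ⟨?_, hterm⟩
  have ha0 : 0 < |a| := abs_pos.2 ha
  have hF : ∀ n : ℕ, Integrable (fun u : ℝ => (-a) ^ n * (u ^ m * Real.exp (-(c * u))
      * pw (α * n + 3 * (α / 2)) u)) (volume.restrict (Set.Ioi 0)) := by
    intro n
    apply Integrable.const_mul
    by_contra h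
    have h1 := integral_undef h
    rw [integral_moment_pw hc (hxn n)] at h1
    have h2 : 0 < negBinCoeff (α * n + 3 * (α / 2)) m := by
      unfold negBinCoeff
      have := hxn n
      have h3 : (0:ℝ) < m.factorial := by exact_mod_cast m.factorial_pos
      exact div_pos (Finset.prod_pos fun j _ => by positivity) h3
    have h3 : (0:ℝ) < m.factorial := by exact_mod_cast m.factorial_pos
    have h4 : 0 < (1 / c) ^ (α * n + 3 * (α / 2) + m) := by positivity
    have : 0 < (1 / c) ^ (α * n + 3 * (α / 2) + m)
        * ((m.factorial : ℝ) * negBinCoeff (α * n + 3 * (α / 2)) m) := by positivity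
    exact this.ne' h1
  have hnorm : ∀ n : ℕ, ∫ u in Set.Ioi (0:ℝ), ‖(-a) ^ n * (u ^ m * Real.exp (-(c * u))
      * pw (α * n + 3 * (α / 2)) u)‖ = |a| ^ n * ((1 / c) ^ (α * n + 3 * (α / 2) + m)
        * ((m.factorial : ℝ) * negBinCoeff (α * n + 3 * (α / 2)) m)) := by
    intro n
    rw [← integral_moment_pw hc (hxn n), ← integral_const_mul]
    apply setIntegral_congr_fun measurableSet_Ioi
    intro u hu
    have hu' : (0:ℝ) < u := hu
    have h2 : 0 ≤ pw (α * n + 3 * (α / 2)) u := pw_nonneg (hxn n) hu'.le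
    simp only
    rw [norm_mul, norm_pow, norm_neg, Real.norm_eq_abs, Real.norm_eq_abs,
      abs_of_nonneg (a := u ^ m * _ * _) (by positivity)]
  have hε1 : Real.sqrt (|a| / c ^ α) < 1 := by
    rw [Real.sqrt_lt' one_pos, one_pow, div_lt_one hcα]; exact hac
  have hsum := hasSum_integral_of_summable_integral_norm hF (by
    simp_rw [hnorm, hterm]
    apply Summable.mul_left
    have := (summable_negBinCoeff (β := α / 2) (ε := Real.sqrt (|a| / c ^ α)) (by linarith)
      (by linarith) (by positivity) hε1 m).abs
    refine this.congr fun n => ?_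
    have h0 : 0 ≤ negBinCoeff (α / 2 * (2 * n + 3)) m := negBinCoeff_nonneg (by positivity) m
    rw [abs_mul, abs_mul, abs_pow, abs_neg, abs_one, one_pow, one_mul, abs_of_nonneg h0,
      abs_of_nonneg (by positivity)])
  simp_rw [integral_const_mul, integral_moment_pw hc (hxn _)] at hsum
  convert! hsum using 1
  apply setIntegral_congr_fun measurableSet_Ioi
  intro u hu
  have := ((hasSum_ml (a := a) hα (by positivity : 0 < 3 * (α / 2)) hu).mul_left
    (u ^ m * Real.exp (-(c * u)))).tsum_eq
  simp only
  rw [← this]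
  congr 1
  funext n
  ring

lemma integrableOn_exp_ml {α a c : ℝ} (hα : 1 < α) (hα2 : α < 2) (ha : 0 < a) (hc : 0 < c)
    (hac : a < c ^ α) :
    IntegrableOn (fun u => Real.exp (-(c * u)) * ml α a (3 * (α / 2)) u) (Set.Ioi 0) := by
  have hτ : 0 < 3 * (α / 2) := by linarith
  have hdom : IntegrableOn (fun u => u ^ 0 * Real.exp (-(c * u)) * ml α (-a) (3 * (α / 2)) u)
      (Set.Ioi 0) := by
    by_contra h
    have h1 := integral_undef h
    obtain ⟨h2, -⟩ := hasSum_moment_ml (a := -a) hα hα2 (by linarith [ha] : -a ≠ 0) hc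
      (by rw [abs_neg, abs_of_pos ha]; exact hac) 0
    rw [h1] at h2
    have h3 : ∀ n : ℕ, 0 ≤ (- -a) ^ n * ((1 / c) ^ (α * n + 3 * (α / 2) + (0:ℕ))
        * (((0:ℕ).factorial : ℝ) * negBinCoeff (α * n + 3 * (α / 2)) 0)) := fun n => by
      rw [negBinCoeff_zero, neg_neg]; positivity
    have h4 := (hasSum_zero_iff_of_nonneg h3).1 h2
    have h5 := congrFun h4 0
    simp only [negBinCoeff_zero, neg_neg, pow_zero] at h5
    simp at h5
    have : 0 < (c ^ (3 * (α / 2)))⁻¹ := by positivity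
    rw [Real.inv_rpow hc.le] at h5
    exact this.ne' h5
  refine Integrable.mono' hdom ?_ ?_
  · refine AEStronglyMeasurable.mul (by fun_prop) ?_
    exact (continuousOn_ml hα hτ).aestronglyMeasurable measurableSet_Ioi
  · filter_upwards [ae_restrict_mem measurableSet_Ioi] with u hu
    have hu' : (0:ℝ) < u := hu
    rw [pow_zero, one_mul, norm_mul, Real.norm_eq_abs, abs_of_pos (Real.exp_pos _)]
    gcongr
    have h1 := hasSum_ml (a := a) hα hτ hu'
    have h2 := hasSum_ml (a := -a) hα hτ hu'
    rw [← h1.tsum_eq]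
    refine tsum_of_norm_bounded h2 fun n => ?_
    have h3 : 0 ≤ pw (α * n + 3 * (α / 2)) u := pw_nonneg (by positivity) hu'.le
    rw [norm_mul, norm_pow, norm_neg, Real.norm_eq_abs, Real.norm_eq_abs, abs_of_pos ha,
      abs_of_nonneg h3, neg_neg]

/-- The kernel `E_{α,3α/2}` is nonnegative on the negative axis: by Post–Widder it suffices that
its Laplace transform `s ^ (-α/2) / (s ^ α + a)` is completely monotone. -/
lemma ml_crit_nonneg {α a t : ℝ} (hα : 1 < α) (hα2 : α < 2) (ha : 0 < a) (ht : 0 < t) :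
    0 ≤ ml α a (3 * (α / 2)) t := by
  have hτ : 0 < 3 * (α / 2) := by linarith
  set c := a + 1 with hc
  have hc0 : 0 < c := by linarith
  have hlarge : ∀ d, c ≤ d → a < d ^ α := fun d hd => by
    have h1 : (1:ℝ) ≤ d := by linarith
    have h2 : d ^ (1:ℝ) ≤ d ^ α := Real.rpow_le_rpow_of_exponent_le h1 hα.le
    rw [Real.rpow_one] at h2
    linarith
  have key := nonneg_of_moments (g := fun u => Real.exp (-(c * u)) * ml α a (3 * (α / 2)) u) ht
    ((by fun_prop : Continuous fun u : ℝ => Real.exp (-(c * u))).continuousOn.mul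
      (continuousOn_ml hα hτ))
    (integrableOn_exp_ml hα hα2 ha hc0 (hlarge c le_rfl)) ?_
  · exact (mul_nonneg_iff_of_pos_left (Real.exp_pos _)).1 key
  intro m
  -- Absorbing the exponential of `bump t u ^ m` moves the abscissa from `c` to `d`. Both exceed
  -- `a ^ (1 / α)`, where the transform expands in powers of `a / d ^ α`.
  set d := c + m / t with hd
  have hcd : c ≤ d := by rw [hd]; have : 0 ≤ m / t := by positivity
                         linarith
  have hd0 : 0 < d := by linarith
  have had := hlarge d hcd
  obtain ⟨h1, h2⟩ := hasSum_moment_ml hα hα2 ha.ne' hd0 (by rw [abs_of_pos ha]; exact had) m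
  have e1 : ∫ u in Set.Ioi (0:ℝ), bump t u ^ m * (Real.exp (-(c * u)) * ml α a (3 * (α / 2)) u)
      = (Real.exp 1 / t) ^ m
        * ∫ u in Set.Ioi (0:ℝ), u ^ m * Real.exp (-(d * u)) * ml α a (3 * (α / 2)) u := by
    rw [← integral_const_mul]
    apply setIntegral_congr_fun measurableSet_Ioi
    intro u _
    have e2 : Real.exp (-(d * u)) = Real.exp (-(u / t)) ^ m * Real.exp (-(c * u)) := by
      rw [← Real.exp_nat_mul, ← Real.exp_add]; congr 1; rw [hd]; field_simp; ring
    have e3 : Real.exp (1 - u / t) = Real.exp 1 * Real.exp (-(u / t)) := by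
      rw [← Real.exp_add]; congr 1
    simp only [bump]
    rw [e2, e3]
    simp only [div_pow, mul_pow]
    ring
  rw [e1]
  apply mul_nonneg (by positivity)
  rw [← h1.tsum_eq]
  have e4 : ∀ n : ℕ, (-a) ^ n * ((1 / d) ^ (α * n + 3 * (α / 2) + m)
        * ((m.factorial : ℝ) * negBinCoeff (α * n + 3 * (α / 2)) m))
      = (1 / d) ^ (3 * (α / 2) + m) * (m.factorial : ℝ) * ((-1) ^ n * (Real.sqrt (|a| / d ^ α)) ^ (2 * n)
        * negBinCoeff (α / 2 * (2 * n + 3)) m) := by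
    intro n
    have := h2 n
    rw [neg_pow a n]
    rw [abs_of_pos ha] at this ⊢
    linear_combination (-1) ^ n * this
  simp_rw [e4]
  rw [tsum_mul_left]
  refine mul_nonneg (by positivity) (tsum_negBinCoeff_nonneg (by linarith) (by linarith) ?_ ?_ m)
  · have := abs_pos.2 ha.ne'
    positivity
  · rw [Real.sqrt_lt' one_pos, one_pow, div_lt_one (by positivity), abs_of_pos ha]; exact had

/-- Orders above `3 α / 2` are fractional integrals of the critical kernel. -/
lemma ml_nonneg {α a τ t : ℝ} (hα : 1 < α) (hα2 : α < 2) (ha : 0 < a) (hτ : 3 * (α / 2) ≤ τ)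
    (ht : 0 < t) : 0 ≤ ml α a τ t := by
  rcases hτ.eq_or_lt with h | h
  · rw [← h]; exact ml_crit_nonneg hα hα2 ha ht
  · have := integral_pw_ml (a := a) hα (sub_pos.2 h) (by linarith : 0 < 3 * (α / 2)) ht
    rw [sub_add_cancel] at this
    rw [← this]
    refine intervalIntegral.integral_nonneg_of_ae_restrict ht.le ?_
    have h0 : ∀ᵐ u : ℝ, u ≠ 0 := by simp [ae_iff]
    filter_upwards [ae_restrict_mem measurableSet_Icc, ae_restrict_of_ae h0] with u hu hu0
    exact mul_nonneg (pw_nonneg (sub_pos.2 h) (by linarith [hu.2]))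
      (ml_crit_nonneg hα hα2 ha (lt_of_le_of_ne hu.1 (Ne.symm hu0)))

lemma ml_le_pw {α a τ t : ℝ} (hα : 1 < α) (hα2 : α < 2) (ha : 0 < a) (hτ : 3 * (α / 2) ≤ τ)
    (ht : 0 < t) : ml α a τ t ≤ pw τ t := by
  rw [ml_rec hα (by linarith) ht]
  have := ml_nonneg hα hα2 ha (by linarith : 3 * (α / 2) ≤ τ + α) ht
  nlinarith

lemma abs_ml_le {α a τ t : ℝ} (hα : 1 < α) (hα2 : α < 2) (ha : 0 < a) (hτ : α / 2 ≤ τ)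
    (ht : 0 < t) : |ml α a τ t| ≤ pw τ t + a * pw (τ + α) t := by
  have hτ0 : 0 < τ := by linarith
  have h1 := ml_nonneg hα hα2 ha (by linarith : 3 * (α / 2) ≤ τ + α) ht
  have h2 := ml_le_pw hα hα2 ha (by linarith : 3 * (α / 2) ≤ τ + α) ht
  have h3 := pw_nonneg hτ0 ht.le
  rw [ml_rec hα hτ0 ht, abs_le]
  constructor <;> nlinarith


/-! ### Laplace transforms -/

/-- The Laplace transform of a real function on `(0, ∞)` at a complex point. -/
noncomputable def lap (g : ℝ → ℝ) (z : ℂ) : ℂ :=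
  ∫ u in Set.Ioi (0:ℝ), (g u : ℂ) * Complex.exp (-(z * u))

/-- Absolute convergence of the Laplace integral of `g` on the line `Re z = c`. -/
def LapConv (g : ℝ → ℝ) (c : ℝ) : Prop :=
  IntegrableOn (fun u => g u * Real.exp (-(c * u))) (Set.Ioi 0)

lemma norm_lap_integrand (g : ℝ → ℝ) (z : ℂ) (u : ℝ) :
    ‖(g u : ℂ) * Complex.exp (-(z * u))‖ = ‖g u * Real.exp (-(z.re * u))‖ := by
  rw [norm_mul, Complex.norm_exp, norm_mul, Complex.norm_real, Real.norm_eq_abs (Real.exp _),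
    abs_of_pos (Real.exp_pos _)]
  simp

lemma aesm_of_lapConv {g : ℝ → ℝ} {c : ℝ} (h : LapConv g c) :
    AEStronglyMeasurable g (volume.restrict (Set.Ioi 0)) := by
  have := h.aestronglyMeasurable.mul
    (by fun_prop : AEStronglyMeasurable (fun u : ℝ => Real.exp (c * u)) (volume.restrict (Set.Ioi 0)))
  refine this.congr (Eventually.of_forall fun u => ?_)
  simp only [Pi.mul_apply]
  rw [mul_assoc, ← Real.exp_add]
  simp

lemma aesm_lap_integrand {g : ℝ → ℝ}
    (h : AEStronglyMeasurable g (volume.restrict (Set.Ioi 0))) (z : ℂ) :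
    AEStronglyMeasurable (fun u : ℝ => (g u : ℂ) * Complex.exp (-(z * u)))
      (volume.restrict (Set.Ioi 0)) :=
  (Complex.continuous_ofReal.comp_aestronglyMeasurable h).mul (by fun_prop)

lemma integrableOn_lap {g : ℝ → ℝ} {z : ℂ} (h : LapConv g z.re) :
    IntegrableOn (fun u : ℝ => (g u : ℂ) * Complex.exp (-(z * u))) (Set.Ioi 0) := by
  refine Integrable.mono h (aesm_lap_integrand (aesm_of_lapConv h) z)
    (Eventually.of_forall fun u => ?_)
  rw [norm_lap_integrand]

lemma lap_conv {f g : ℝ → ℝ} {z : ℂ} (hf : LapConv f z.re) (hg : LapConv g z.re) :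
    lap (fun t => ∫ u in (0:ℝ)..t, f (t - u) * g u) z = lap f z * lap g z := by
  have h := integral_posConvolution (integrableOn_lap hg) (integrableOn_lap hf)
    (ContinuousLinearMap.mul ℝ ℂ)
  rw [ContinuousLinearMap.mul_apply'] at h
  rw [lap, lap, lap, mul_comm (∫ u in Set.Ioi (0:ℝ), _), ← h]
  apply setIntegral_congr_fun measurableSet_Ioi
  intro t _
  simp only [ContinuousLinearMap.mul_apply']
  rw [← intervalIntegral.integral_ofReal, ← intervalIntegral.integral_mul_const]
  congr 1
  funext u
  push_cast
  rw [show -(z * t) = -(z * u) + -(z * (t - u)) by ring, Complex.exp_add]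
  ring

lemma hasDerivAt_lap {g : ℝ → ℝ} {c : ℝ} (hg : LapConv g c) (hg' : LapConv (fun u => u * g u) c)
    (y : ℝ) :
    HasDerivAt (fun y : ℝ => lap g (c + y * Complex.I))
      (-Complex.I * lap (fun u => u * g u) (c + y * Complex.I)) y := by
  have hre : ∀ y : ℝ, ((c : ℂ) + y * Complex.I).re = c := fun y => by simp
  have key := hasDerivAt_integral_of_dominated_loc_of_deriv_le (μ := volume.restrict (Set.Ioi (0:ℝ)))
    (F := fun (y : ℝ) (u : ℝ) => (g u : ℂ) * Complex.exp (-((c + y * Complex.I) * u)))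
    (F' := fun (y : ℝ) (u : ℝ) => -Complex.I * (((u * g u : ℝ) : ℂ)
      * Complex.exp (-((c + y * Complex.I) * u))))
    (bound := fun u => ‖u * g u * Real.exp (-(c * u))‖) (x₀ := y) (s := Set.univ) Filter.univ_mem
    (Eventually.of_forall fun y => aesm_lap_integrand (aesm_of_lapConv hg) _)
    (integrableOn_lap (by rw [hre]; exact hg))
    ((aesm_lap_integrand (aesm_of_lapConv hg') _).const_mul _)
    (Eventually.of_forall fun u y _ => by
      have := norm_lap_integrand (fun u => u * g u) (c + y * Complex.I) u
      rw [hre] at this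
      rw [norm_mul, this]
      simp)
    hg'.norm
    (Eventually.of_forall fun u y _ => by
      have h1 : HasDerivAt (fun y : ℝ => (y : ℂ)) 1 y := Complex.ofRealCLM.hasDerivAt
      have h2 := ((((h1.mul_const Complex.I).const_add (c : ℂ)).mul_const (u : ℂ)).neg.cexp).const_mul
        (g u : ℂ)
      simp only [Pi.neg_apply] at h2
      convert! h2 using 1
      push_cast
      ring)
  have := key.2
  rw [integral_const_mul] at this
  exact this

lemma lapConv_pw {τ c : ℝ} (hτ : 0 < τ) (hc : 0 < c) : LapConv (pw τ) c := by
  by_contra h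
  have h1 := integral_undef h
  have h2 := integral_moment_pw hc hτ 0
  have e : ∀ u : ℝ, u ^ 0 * Real.exp (-(c * u)) * pw τ u = pw τ u * Real.exp (-(c * u)) :=
    fun u => by ring
  simp_rw [e] at h2
  rw [h1, negBinCoeff_zero] at h2
  have : 0 < (1 / c) ^ (τ + (0:ℕ)) * (((0:ℕ).factorial : ℝ) * 1) := by positivity
  linarith

lemma mul_pw {τ u : ℝ} (hτ : 0 < τ) (hu : 0 < u) : u * pw τ u = τ * pw (τ + 1) u := by
  have := (Real.Gamma_pos_of_pos hτ).ne'
  rw [pw, pw, Real.Gamma_add_one hτ.ne', add_sub_cancel_right]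
  have h : u ^ τ = u ^ (τ - 1) * u := by
    nth_rw 3 [← Real.rpow_one u]
    rw [← Real.rpow_add hu, sub_add_cancel]
  rw [h]
  field_simp

lemma lapConv_congr {f g : ℝ → ℝ} {c : ℝ} (hf : LapConv f c) (h : ∀ u, 0 < u → f u = g u) :
    LapConv g c :=
  (integrableOn_congr_fun (fun u hu => by rw [h u hu]) measurableSet_Ioi).1 hf

lemma lap_congr {f g : ℝ → ℝ} {z : ℂ} (h : ∀ u, 0 < u → f u = g u) : lap f z = lap g z :=
  setIntegral_congr_fun measurableSet_Ioi (fun u hu => by rw [h u hu])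

lemma lap_const_mul (k : ℝ) (g : ℝ → ℝ) (z : ℂ) : lap (fun u => k * g u) z = k * lap g z := by
  rw [lap, lap, ← integral_const_mul]
  congr 1
  funext u
  push_cast
  ring

lemma LapConv.const_mul' {g : ℝ → ℝ} {c : ℝ} (k : ℝ) (h : LapConv g c) :
    LapConv (fun u => k * g u) c := by
  have := Integrable.const_mul h k
  refine this.congr (Eventually.of_forall fun u => ?_)
  simp only
  ring

lemma lapConv_mul_pw {τ c : ℝ} (hτ : 0 < τ) (hc : 0 < c) : LapConv (fun u => u * pw τ u) c :=
  lapConv_congr ((lapConv_pw (by linarith : 0 < τ + 1) hc).const_mul' τ)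
    (fun _ hu => (mul_pw hτ hu).symm)

lemma lap_pw_ofReal {τ c : ℝ} (hτ : 0 < τ) (hc : 0 < c) :
    lap (pw τ) c = ((c ^ (-τ) : ℝ) : ℂ) := by
  have h2 := integral_moment_pw hc hτ 0
  have e : ∀ u : ℝ, (u ^ 0 * Real.exp (-(c * u)) * pw τ u) = pw τ u * Real.exp (-(c * u)) :=
    fun u => by ring
  simp_rw [e] at h2
  have h3 : lap (pw τ) c = ((∫ u in Set.Ioi (0:ℝ), pw τ u * Real.exp (-(c * u)) : ℝ) : ℂ) := by
    rw [lap, ← integral_complex_ofReal]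
    congr 1
    funext u
    push_cast
    rfl
  rw [h3, h2, negBinCoeff_zero]
  congr 1
  rw [Real.rpow_neg hc.le, one_div, Real.inv_rpow hc.le]
  simp

lemma re_line (c y : ℝ) : ((c : ℂ) + y * Complex.I).re = c := by simp

lemma line_mem_slitPlane {c : ℝ} (hc : 0 < c) (y : ℝ) :
    (c : ℂ) + y * Complex.I ∈ Complex.slitPlane := by
  left; rw [re_line]; exact hc

lemma hasDerivAt_line (c y : ℝ) :
    HasDerivAt (fun y : ℝ => (c : ℂ) + y * Complex.I) Complex.I y := by
  have h1 : HasDerivAt (fun y : ℝ => (y : ℂ)) 1 y := Complex.ofRealCLM.hasDerivAt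
  simpa using (h1.mul_const Complex.I).const_add (c : ℂ)

lemma hasDerivAt_line_cpow {c : ℝ} (hc : 0 < c) (s : ℂ) (y : ℝ) :
    HasDerivAt (fun y : ℝ => ((c : ℂ) + y * Complex.I) ^ s)
      (s * ((c : ℂ) + y * Complex.I) ^ (s - 1) * Complex.I) y :=
  HasDerivAt.comp (h₂ := fun z : ℂ => z ^ s) y
    (by simpa using (hasDerivAt_id _).cpow_const (c := s) (line_mem_slitPlane hc y))
    (hasDerivAt_line c y)

/-- Euler's integral `∫ u ^ (τ - 1) e ^ (-z u) du = Γ(τ) z ^ (-τ)` for complex `z`. On a vertical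
line both sides solve the same first-order differential equation, and they agree at the real
point. -/
lemma lap_pw {τ : ℝ} (hτ : 0 < τ) {z : ℂ} (hz : 0 < z.re) : lap (pw τ) z = z ^ (-τ : ℂ) := by
  have one : ∀ (z : ℂ), 0 < z.re → lap (pw 1) z = 1 / z := by
    intro z hz
    have h := integral_exp_mul_complex_Ioi (a := -z) (by simpa using hz) 0
    have e : lap (pw 1) z = ∫ x in Set.Ioi (0:ℝ), Complex.exp (-z * x) := by
      rw [lap]
      apply setIntegral_congr_fun measurableSet_Ioi
      intro u _
      simp [pw]
    rw [e, h]
    simp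
  have step : ∀ (τ : ℝ), 0 < τ → ∀ z : ℂ, 0 < z.re →
      lap (fun u => u * pw τ u) z = τ / z * lap (pw τ) z := by
    intro τ hτ z hz
    rw [lap_congr (fun u hu => mul_pw hτ hu), lap_const_mul]
    have h1 := lap_conv (lapConv_pw one_pos hz) (lapConv_pw hτ hz)
    rw [lap_congr (fun u hu => integral_pw_pw one_pos hτ hu), one z hz, add_comm] at h1
    rw [h1]
    ring
  obtain ⟨c, y, rfl⟩ : ∃ c y : ℝ, z = c + y * Complex.I := ⟨z.re, z.im, (Complex.re_add_im z).symm⟩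
  rw [re_line] at hz
  have hne : ∀ y : ℝ, (c : ℂ) + y * Complex.I ≠ 0 := fun y =>
    Complex.slitPlane_ne_zero (line_mem_slitPlane hz y)
  have hder : ∀ y : ℝ, HasDerivAt (fun y : ℝ => lap (pw τ) (c + y * Complex.I)
      * ((c : ℂ) + y * Complex.I) ^ (τ : ℂ)) 0 y := by
    intro y
    have := (hasDerivAt_lap (lapConv_pw hτ hz) (lapConv_mul_pw hτ hz) y).mul
      (hasDerivAt_line_cpow hz τ y)
    convert! this using 1
    rw [step τ hτ _ (by rw [re_line]; exact hz), Complex.cpow_sub _ _ (hne y), Complex.cpow_one]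
    have := hne y
    field_simp
    ring
  have hconst := is_const_of_deriv_eq_zero (fun y => (hder y).differentiableAt)
    (fun y => (hder y).deriv) y 0
  simp only [Complex.ofReal_zero, zero_mul, add_zero] at hconst
  rw [lap_pw_ofReal hτ hz, ← Complex.ofReal_cpow hz.le, ← Complex.ofReal_mul,
    ← Real.rpow_add hz, neg_add_cancel, Real.rpow_zero, Complex.ofReal_one] at hconst
  rw [Complex.cpow_neg]
  exact eq_inv_of_mul_eq_one_left hconst

lemma lapConv_of_bound {f g : ℝ → ℝ} {c : ℝ} (hg : LapConv g c)
    (hf : AEStronglyMeasurable f (volume.restrict (Set.Ioi 0)))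
    (h : ∀ u, 0 < u → |f u| ≤ g u) : LapConv f c := by
  refine Integrable.mono' hg (hf.mul (by fun_prop)) ?_
  filter_upwards [ae_restrict_mem measurableSet_Ioi] with u hu
  rw [norm_mul, Real.norm_eq_abs, Real.norm_eq_abs, abs_of_pos (Real.exp_pos _)]
  gcongr
  exact h u hu

lemma LapConv.add' {f g : ℝ → ℝ} {c : ℝ} (hf : LapConv f c) (hg : LapConv g c) :
    LapConv (fun u => f u + g u) c := by
  refine (Integrable.add hf hg).congr (Eventually.of_forall fun u => ?_)
  simp only [Pi.add_apply]
  ring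

lemma lap_add {f g : ℝ → ℝ} {z : ℂ} (hf : LapConv f z.re) (hg : LapConv g z.re) :
    lap (fun u => f u + g u) z = lap f z + lap g z := by
  rw [lap, lap, lap, ← integral_add (integrableOn_lap hf) (integrableOn_lap hg)]
  congr 1
  funext u
  push_cast
  ring

lemma lapConv_ml {α a τ c : ℝ} (hα : 1 < α) (hα2 : α < 2) (ha : 0 < a) (hτ : α / 2 ≤ τ)
    (hc : 0 < c) : LapConv (ml α a τ) c :=
  lapConv_of_bound ((lapConv_pw (by linarith) hc).add'
      ((lapConv_pw (by linarith : 0 < τ + α) hc).const_mul' a))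
    ((continuousOn_ml hα (by linarith)).aestronglyMeasurable measurableSet_Ioi)
    (fun _ hu => abs_ml_le hα hα2 ha hτ hu)

lemma lapConv_mul_ml {α a τ c : ℝ} (hα : 1 < α) (hα2 : α < 2) (ha : 0 < a) (hτ : α / 2 ≤ τ)
    (hc : 0 < c) : LapConv (fun u => u * ml α a τ u) c :=
  lapConv_of_bound ((lapConv_mul_pw (by linarith : 0 < τ) hc).add'
      ((lapConv_mul_pw (by linarith : 0 < τ + α) hc).const_mul' a))
    ((continuousOn_id.mul (continuousOn_ml hα (by linarith))).aestronglyMeasurable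
      measurableSet_Ioi)
    (fun u hu => by
      rw [abs_mul, abs_of_pos hu]
      have := mul_le_mul_of_nonneg_left (abs_ml_le hα hα2 ha hτ hu) hu.le
      linarith)

/-- On the right half plane the argument of `z ^ α` stays
in `[-πα/2, πα/2]`, away from `±π`, so that `z ^ α` and `a` cannot cancel. -/
lemma exists_cpow_add_bound {α a : ℝ} (hα : 1 < α) (hα2 : α < 2) (ha : 0 < a) :
    ∃ κ, 0 < κ ∧ ∀ z : ℂ, 0 < z.re → κ * (‖z‖ ^ α + a) ≤ ‖z ^ (α : ℂ) + a‖ := by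
  set q := max (-Real.cos (α * (Real.pi / 2))) 0 with hq
  have hpi := Real.pi_pos
  have hq1 : q < 1 := by
    apply max_lt _ one_pos
    have : Real.cos Real.pi < Real.cos (α * (Real.pi / 2)) :=
      Real.cos_lt_cos_of_nonneg_of_le_pi (by positivity) le_rfl (by nlinarith)
    rw [Real.cos_pi] at this
    linarith
  have hq0 : 0 ≤ q := le_max_right _ _
  refine ⟨Real.sqrt ((1 - q) / 2), Real.sqrt_pos.2 (by linarith), fun z hz => ?_⟩
  have harg := (Complex.abs_arg_lt_pi_div_two_iff.2 (Or.inl hz))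
  set R := ‖z‖ ^ α with hR
  have hR0 : 0 ≤ R := by positivity
  have hcos : -q ≤ Real.cos (z.arg * α) := by
    rw [← Real.cos_abs, abs_mul, abs_of_pos (by linarith : 0 < α)]
    have h1 : Real.cos (α * (Real.pi / 2)) ≤ Real.cos (|z.arg| * α) :=
      Real.cos_le_cos_of_nonneg_of_le_pi (by positivity) (by nlinarith)
        (by nlinarith)
    have := le_max_left (-Real.cos (α * (Real.pi / 2))) 0
    linarith
  have hval : z ^ (α : ℂ) + a = ⟨R * Real.cos (z.arg * α) + a, R * Real.sin (z.arg * α)⟩ := by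
    rw [Complex.cpow_ofReal, Complex.mk_eq_add_mul_I]
    push_cast
    rw [hR]
    ring
  rw [hval]
  have hn : (Real.sqrt ((1 - q) / 2) * (R + a)) ^ 2 ≤
      ‖(⟨R * Real.cos (z.arg * α) + a, R * Real.sin (z.arg * α)⟩ : ℂ)‖ ^ 2 := by
    rw [mul_pow, Real.sq_sqrt (by linarith), Complex.sq_norm, Complex.normSq_mk]
    have hsc := Real.sin_sq_add_cos_sq (z.arg * α)
    have h1 : 0 ≤ R * a * (Real.cos (z.arg * α) + q) := by
      apply mul_nonneg (by positivity); linarith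
    have h2 : 0 ≤ (1 + q) * (R - a) ^ 2 := by positivity
    have h3 : R ^ 2 * (Real.sin (z.arg * α) ^ 2 + Real.cos (z.arg * α) ^ 2) = R ^ 2 := by
      rw [hsc, mul_one]
    nlinarith
  exact (sq_le_sq₀ (by positivity) (norm_nonneg _)).1 hn

lemma lap_ml {α a τ : ℝ} (hα : 1 < α) (hα2 : α < 2) (ha : 0 < a) (hτ : α / 2 ≤ τ) {z : ℂ}
    (hz : 0 < z.re) : lap (ml α a τ) z = z ^ ((α - τ : ℝ) : ℂ) / (z ^ (α : ℂ) + a) := by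
  have hz0 : z ≠ 0 := by rintro rfl; simp at hz
  have hτ0 : 0 < τ := by linarith
  have h1 : lap (pw τ) z = lap (ml α a τ) z + a * (lap (pw α) z * lap (ml α a τ) z) := by
    rw [← lap_conv (lapConv_pw (by linarith) hz) (lapConv_ml hα hα2 ha hτ hz),
      lap_congr (fun u hu => integral_pw_ml hα (by linarith : 0 < α) hτ0 hu),
      ← lap_const_mul, ← lap_add (lapConv_ml hα hα2 ha hτ hz)
        ((lapConv_ml hα hα2 ha (by linarith) hz).const_mul' a)]
    apply lap_congr
    intro u hu
    have := ml_rec (a := a) hα hτ0 hu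
    rw [add_comm α τ]
    linarith
  rw [lap_pw hτ0 hz, lap_pw (by linarith) hz, Complex.cpow_neg, Complex.cpow_neg] at h1
  obtain ⟨κ, hκ, hb⟩ := exists_cpow_add_bound hα hα2 ha
  have hne : z ^ (α : ℂ) + a ≠ 0 := by
    rw [← norm_pos_iff]
    exact lt_of_lt_of_le (by positivity) (hb z hz)
  have h2 : z ^ (α : ℂ) ≠ 0 := by simp [Complex.cpow_eq_zero_iff, hz0]
  have h3 : z ^ (τ : ℂ) ≠ 0 := by simp [Complex.cpow_eq_zero_iff, hz0]
  rw [eq_div_iff hne, Complex.ofReal_sub, Complex.cpow_sub _ _ hz0, eq_div_iff h3]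
  field_simp at h1
  linear_combination -h1


/-! ### Decay of the kernels -/

lemma hasDerivAt_line_sub {α a τ c : ℝ} (hc : 0 < c) (y : ℝ)
    (hne : ((c : ℂ) + y * Complex.I) ^ (α : ℂ) + a ≠ 0) :
    HasDerivAt (fun y : ℝ => ((c : ℂ) + y * Complex.I) ^ ((α - τ : ℝ) : ℂ)
        / (((c : ℂ) + y * Complex.I) ^ (α : ℂ) + a))
      ((((α - τ : ℝ) : ℂ) * ((c : ℂ) + y * Complex.I) ^ ((α - τ - 1 : ℝ) : ℂ)
          * (((c : ℂ) + y * Complex.I) ^ (α : ℂ) + a)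
        - ((c : ℂ) + y * Complex.I) ^ ((α - τ : ℝ) : ℂ)
          * (α * ((c : ℂ) + y * Complex.I) ^ ((α - 1 : ℝ) : ℂ)))
        / (((c : ℂ) + y * Complex.I) ^ (α : ℂ) + a) ^ 2 * Complex.I) y := by
  have h := (hasDerivAt_line_cpow hc ((α - τ : ℝ) : ℂ) y).div
    ((hasDerivAt_line_cpow hc (α : ℂ) y).add_const (a : ℂ)) hne
  convert! h using 1
  push_cast
  ring

/-- The Laplace transform of `u ↦ u * ml α a τ u` is minus the derivative of
`z ^ (α - τ) / (z ^ α + a)`, whence this bound. -/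
lemma exists_norm_lap_mul_ml_le {α a τ : ℝ} (hα : 1 < α) (hα2 : α < 2) (ha : 0 < a)
    (hτ : α / 2 ≤ τ) :
    ∃ C, 0 < C ∧ ∀ c y : ℝ, 0 < c → ‖lap (fun u => u * ml α a τ u) (c + y * Complex.I)‖
      ≤ C * (‖(c + y * Complex.I : ℂ)‖ ^ (α - τ - 1) / (‖(c + y * Complex.I : ℂ)‖ ^ α + a)) := by
  obtain ⟨κ, hκ, hb⟩ := exists_cpow_add_bound hα hα2 ha
  refine ⟨|α - τ| / κ + α / κ ^ 2, by positivity, fun c y hc => ?_⟩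
  have hre : ∀ y : ℝ, 0 < ((c : ℂ) + y * Complex.I).re := fun y => by rw [re_line]; exact hc
  have hbz := hb _ (hre y)
  have hne : ((c : ℂ) + y * Complex.I) ^ (α : ℂ) + a ≠ 0 := by
    rw [← norm_pos_iff]
    exact lt_of_lt_of_le (by positivity) hbz
  have h1 := hasDerivAt_lap (lapConv_ml hα hα2 ha hτ hc) (lapConv_mul_ml hα hα2 ha hτ hc) y
  have h2 := hasDerivAt_line_sub (τ := τ) hc y hne
  have hfun : (fun y : ℝ => lap (ml α a τ) (c + y * Complex.I))
      = fun y : ℝ => ((c : ℂ) + y * Complex.I) ^ ((α - τ : ℝ) : ℂ)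
        / (((c : ℂ) + y * Complex.I) ^ (α : ℂ) + a) := by
    funext y
    exact lap_ml hα hα2 ha hτ (hre y)
  rw [hfun] at h1
  have h3 := congrArg norm (h1.unique h2)
  rw [norm_mul, norm_neg, Complex.norm_I, one_mul, norm_mul, Complex.norm_I, mul_one] at h3
  rw [h3]
  have hz0 : (c : ℂ) + y * Complex.I ≠ 0 := Complex.slitPlane_ne_zero (line_mem_slitPlane hc y)
  set z : ℂ := (c : ℂ) + y * Complex.I with hz
  set x := ‖z‖ with hx
  have hx0 : 0 < x := norm_pos_iff.2 hz0
  set N := ‖z ^ (α : ℂ) + a‖ with hN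
  have hD : 0 < x ^ α + a := by positivity
  have hN0 : 0 < N := norm_pos_iff.2 hne
  have hnum : ‖((α - τ : ℝ) : ℂ) * z ^ ((α - τ - 1 : ℝ) : ℂ) * (z ^ (α : ℂ) + a)
        - z ^ ((α - τ : ℝ) : ℂ) * (α * z ^ ((α - 1 : ℝ) : ℂ))‖
      ≤ |α - τ| * x ^ (α - τ - 1) * N + α * (x ^ (α - τ - 1) * x ^ α) := by
    refine (norm_sub_le _ _).trans (add_le_add ?_ ?_)
    · rw [norm_mul, norm_mul, Complex.norm_real, Complex.norm_cpow_real, Real.norm_eq_abs]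
    · rw [norm_mul, norm_mul, Complex.norm_real, Complex.norm_cpow_real, Complex.norm_cpow_real,
        Real.norm_eq_abs, abs_of_pos (by linarith : 0 < α), ← hx, mul_left_comm,
        ← Real.rpow_add hx0, ← Real.rpow_add hx0]
      apply le_of_eq
      congr 2
      ring
  rw [norm_div, norm_pow, ← hN]
  have hP : 0 ≤ x ^ (α - τ - 1) := by positivity
  have hxa : 0 ≤ x ^ α := by positivity
  have i1 : 1 / N ≤ 1 / (κ * (x ^ α + a)) := one_div_le_one_div_of_le (by positivity) hbz
  have i2 : x ^ α / N ^ 2 ≤ 1 / (κ ^ 2 * (x ^ α + a)) := by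
    have : (κ * (x ^ α + a)) ^ 2 ≤ N ^ 2 := by gcongr
    rw [div_le_div_iff₀ (by positivity) (by positivity)]
    nlinarith [mul_nonneg (sq_nonneg κ) (mul_nonneg hD.le ha.le)]
  calc _ ≤ (|α - τ| * x ^ (α - τ - 1) * N + α * (x ^ (α - τ - 1) * x ^ α)) / N ^ 2 := by gcongr
    _ = |α - τ| * x ^ (α - τ - 1) * (1 / N) + α * x ^ (α - τ - 1) * (x ^ α / N ^ 2) := by
      field_simp
    _ ≤ |α - τ| * x ^ (α - τ - 1) * (1 / (κ * (x ^ α + a)))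
        + α * x ^ (α - τ - 1) * (1 / (κ ^ 2 * (x ^ α + a))) := by gcongr
    _ = _ := by
      field_simp

/-- An integrable majorant on the real line with prescribed power behaviour at `0` and `∞`. -/
noncomputable def decayMajorant (δ τ y : ℝ) : ℝ :=
  (Set.Ioc (0:ℝ) 1).indicator (fun r => r ^ (δ - 1)) |y|
    + (Set.Ioi (1:ℝ)).indicator (fun r => r ^ (-1 - τ)) |y|

lemma integrable_decayMajorant {δ τ : ℝ} (hδ : 0 < δ) (hτ : 0 < τ) :
    Integrable (decayMajorant δ τ) := by
  set h : ℝ → ℝ := fun r => (Set.Ioc (0:ℝ) 1).indicator (fun r => r ^ (δ - 1)) r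
    + (Set.Ioi (1:ℝ)).indicator (fun r => r ^ (-1 - τ)) r with hh
  have h1 : Integrable h := by
    apply Integrable.add
    · rw [integrable_indicator_iff measurableSet_Ioc]
      exact (intervalIntegrable_iff_integrableOn_Ioc_of_le zero_le_one).1
        (intervalIntegral.intervalIntegrable_rpow' (by linarith))
    · rw [integrable_indicator_iff measurableSet_Ioi]
      exact integrableOn_Ioi_rpow_of_lt (by linarith) one_pos
  have hpos : IntegrableOn (fun y => h |y|) (Set.Ioi 0) :=
    (integrableOn_congr_fun (fun y hy => by rw [abs_of_pos hy]) measurableSet_Ioi).2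
      h1.integrableOn
  have hneg : IntegrableOn (fun y => h |y|) (Set.Iic 0) := by
    rw [← Measure.map_neg_eq_self (volume : Measure ℝ)]
    let m : MeasurableEmbedding fun x : ℝ => -x := (Homeomorph.neg ℝ).measurableEmbedding
    rw [m.integrableOn_map_iff]
    simp_rw [Function.comp_def, abs_neg, Set.neg_preimage, Set.neg_Iic, neg_zero]
    exact Iff.mpr integrableOn_Ici_iff_integrableOn_Ioi hpos
  have := hneg.union hpos
  rw [Set.Iic_union_Ioi, integrableOn_univ] at this
  exact this

lemma decayMajorant_nonneg (δ τ y : ℝ) : 0 ≤ decayMajorant δ τ y :=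
  add_nonneg (Set.indicator_nonneg (fun _ h => Real.rpow_nonneg h.1.le _) _)
    (Set.indicator_nonneg (fun _ h => Real.rpow_nonneg (zero_le_one.trans (le_of_lt h)) _) _)

lemma rpow_div_le_decayMajorant {α a τ η δ t x y : ℝ} (ha : 0 < a) (hτ : 0 < τ)
    (hη : 0 ≤ η) (hδ1 : δ ≤ 1) (hδ : δ ≤ η + α - τ) (ht : 1 ≤ t) (hx : 1 / t ≤ x) (hy : y ≠ 0)
    (hxy : |y| ≤ x) :
    x ^ (α - τ - 1) / (x ^ α + a) ≤ (1 / a + 1) * t ^ η * decayMajorant δ τ y := by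
  have hx0 : 0 < x := lt_of_lt_of_le (by positivity) hx
  have hy0 : 0 < |y| := abs_pos.2 hy
  have htη : 1 ≤ t ^ η := Real.one_le_rpow ht hη
  have hxa : 0 < x ^ α := by positivity
  have hD := decayMajorant_nonneg δ τ y
  rcases le_or_gt x 1 with h | h
  · have hm : decayMajorant δ τ y = |y| ^ (δ - 1) := by
      have h1 : |y| ∈ Set.Ioc (0:ℝ) 1 := ⟨hy0, hxy.trans h⟩
      have h2 : |y| ∉ Set.Ioi (1:ℝ) := by simpa using hxy.trans h
      rw [decayMajorant, Set.indicator_of_mem h1, Set.indicator_of_notMem h2, add_zero]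
    have i1 : x ^ (α - τ - δ) ≤ t ^ η := by
      calc x ^ (α - τ - δ) ≤ x ^ (-η) :=
            Real.rpow_le_rpow_of_exponent_ge hx0 h (by linarith)
        _ ≤ (1 / t) ^ (-η) := Real.rpow_le_rpow_of_nonpos (by positivity) hx (by linarith)
        _ = t ^ η := by
          rw [one_div, Real.inv_rpow (by positivity), Real.rpow_neg (by positivity), inv_inv]
    have i2 : x ^ (δ - 1) ≤ |y| ^ (δ - 1) := Real.rpow_le_rpow_of_nonpos hy0 hxy (by linarith)
    have i3 : x ^ (α - τ - 1) = x ^ (α - τ - δ) * x ^ (δ - 1) := by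
      rw [← Real.rpow_add hx0]; congr 1; ring
    calc x ^ (α - τ - 1) / (x ^ α + a) ≤ x ^ (α - τ - 1) / a := by
          gcongr
          linarith
      _ ≤ t ^ η * decayMajorant δ τ y / a := by
          rw [i3, hm]
          gcongr
      _ ≤ _ := by
          have : 0 ≤ t ^ η * decayMajorant δ τ y := by positivity
          rw [add_mul, add_mul, one_mul]
          have e : 1 / a * t ^ η * decayMajorant δ τ y = t ^ η * decayMajorant δ τ y / a := by ring
          linarith
  · have i1 : x ^ (α - τ - 1) / (x ^ α + a) ≤ x ^ (-1 - τ) := by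
      rw [div_le_iff₀ (by positivity)]
      have e : x ^ (α - τ - 1) = x ^ (-1 - τ) * x ^ α := by
        rw [← Real.rpow_add hx0]; congr 1; ring
      have : 0 < x ^ (-1 - τ) := by positivity
      rw [e]
      nlinarith
    have i2 : x ^ (-1 - τ) ≤ decayMajorant δ τ y := by
      rcases le_or_gt |y| 1 with hy1 | hy1
      · have h1 : |y| ∈ Set.Ioc (0:ℝ) 1 := ⟨hy0, hy1⟩
        have h2 : |y| ∉ Set.Ioi (1:ℝ) := by simpa using hy1
        rw [decayMajorant, Set.indicator_of_mem h1, Set.indicator_of_notMem h2, add_zero]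
        calc x ^ (-1 - τ) ≤ 1 := Real.rpow_le_one_of_one_le_of_nonpos h.le (by linarith)
          _ ≤ _ := Real.one_le_rpow_of_pos_of_le_one_of_nonpos hy0 hy1 (by linarith)
      · have h1 : |y| ∉ Set.Ioc (0:ℝ) 1 := fun hh => absurd hh.2 (not_le.2 hy1)
        rw [decayMajorant, Set.indicator_of_notMem h1, Set.indicator_of_mem (Set.mem_Ioi.2 hy1),
          zero_add]
        exact Real.rpow_le_rpow_of_nonpos hy0 hxy (by linarith)
    have : 1 ≤ (1 / a + 1) * t ^ η := by
      have : 0 < 1 / a := by positivity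
      nlinarith
    nlinarith

/-- Fourier inversion on the line `Re z = c`, in the form of a bound. -/
lemma abs_le_integral_lap {g : ℝ → ℝ} {c t : ℝ} {H : ℝ → ℝ} (hg : LapConv g c) (ht : 0 < t)
    (hgc : ContinuousAt g t)
    (hm : Measurable fun y : ℝ => lap g (c + y * Complex.I))
    (hH : Integrable H)
    (hb : ∀ᵐ y : ℝ, ‖lap g (c + ((2 * Real.pi * y : ℝ) : ℂ) * Complex.I)‖ ≤ H y) :
    |g t * Real.exp (-(c * t))| ≤ ∫ y, H y := by
  set F : ℝ → ℂ := (Set.Ioi (0:ℝ)).indicator fun u => ((g u * Real.exp (-(c * u)) : ℝ) : ℂ) with hF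
  have hFi : Integrable F := by
    rw [hF, integrable_indicator_iff measurableSet_Ioi]
    exact Integrable.ofReal hg
  have hFF : FourierTransform.fourier F
      = fun y : ℝ => lap g (c + ((2 * Real.pi * y : ℝ) : ℂ) * Complex.I) := by
    funext y
    rw [Real.fourier_real_eq_integral_exp_smul, lap, ← integral_indicator measurableSet_Ioi]
    congr 1
    funext u
    by_cases hu : u ∈ Set.Ioi (0:ℝ)
    · rw [hF, Set.indicator_of_mem hu, Set.indicator_of_mem hu, smul_eq_mul]
      push_cast
      rw [mul_left_comm, ← Complex.exp_add]
      congr 2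
      ring
    · rw [hF, Set.indicator_of_notMem hu, Set.indicator_of_notMem hu, smul_zero]
  have hmeas : AEStronglyMeasurable (FourierTransform.fourier F) volume := by
    rw [hFF]
    exact (hm.comp (measurable_const_mul (2 * Real.pi))).aestronglyMeasurable
  have hFFi : Integrable (FourierTransform.fourier F) := by
    refine Integrable.mono' hH hmeas ?_
    rw [hFF]
    exact hb
  have hFt : ContinuousAt F t := by
    have h1 : ContinuousAt (fun u => ((g u * Real.exp (-(c * u)) : ℝ) : ℂ)) t := by fun_prop
    refine h1.congr ?_
    filter_upwards [Ioi_mem_nhds ht] with u hu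
    rw [hF, Set.indicator_of_mem hu]
  have hinv := hFi.fourierInv_fourier_eq hFFi hFt
  have hval : ‖F t‖ = |g t * Real.exp (-(c * t))| := by
    rw [hF, Set.indicator_of_mem (Set.mem_Ioi.2 ht), Complex.norm_real, Real.norm_eq_abs]
  rw [← hval, ← hinv, Real.fourierInv_eq]
  refine (norm_integral_le_integral_norm _).trans ?_
  simp only [Circle.norm_smul]
  refine integral_mono_ae hFFi.norm hH ?_
  rw [hFF]
  exact hb

/-- Polynomial decay of the Mittag-Leffler kernels: `ml α a τ t = O(t ^ (η - 1))` for all `η ≥ 0`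
with `η > τ - α`. Inversion is applied to `u * ml α a τ u`, whose transform is integrable on vertical
lines, along the line `Re z = 1 / t`, on which `e ^ (z t)` is bounded. -/
lemma exists_ml_decay {α a τ η : ℝ} (hα : 1 < α) (hα2 : α < 2) (ha : 0 < a) (hτ : α / 2 ≤ τ)
    (hη : 0 ≤ η) (hητ : τ - α < η) :
    ∃ C, 0 < C ∧ ∀ t, 1 ≤ t → |ml α a τ t| ≤ C * t ^ (η - 1) := by
  have hτ0 : 0 < τ := by linarith
  set δ := min (η + α - τ) 1 with hδ
  have hδ0 : 0 < δ := lt_min (by linarith) one_pos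
  obtain ⟨C, hC, hCb⟩ := exists_norm_lap_mul_ml_le hα hα2 ha hτ
  set J := ∫ y, decayMajorant δ τ y with hJ
  have hJ0 : 0 ≤ J := integral_nonneg (decayMajorant_nonneg δ τ)
  refine ⟨Real.exp 1 * (C * (1 / a + 1) * J) + 1, by positivity, fun t ht => ?_⟩
  have ht0 : 0 < t := by linarith
  have hc : 0 < 1 / t := by positivity
  have hmeas : Measurable fun y : ℝ =>
      lap (fun u => u * ml α a τ u) (((1 / t : ℝ) : ℂ) + y * Complex.I) := by
    have e : (fun y : ℝ => lap (fun u => u * ml α a τ u) (((1 / t : ℝ) : ℂ) + y * Complex.I))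
        = fun y => Complex.I * deriv (fun y : ℝ =>
          lap (ml α a τ) (((1 / t : ℝ) : ℂ) + y * Complex.I)) y := by
      funext y
      rw [(hasDerivAt_lap (lapConv_ml hα hα2 ha hτ hc) (lapConv_mul_ml hα hα2 ha hτ hc) y).deriv,
        ← mul_assoc, mul_neg, Complex.I_mul_I, neg_neg, one_mul]
    rw [e]
    exact (measurable_deriv _).const_mul _
  have hcont : ContinuousAt (fun u => u * ml α a τ u) t :=
    continuousAt_id.mul ((continuousOn_ml hα hτ0).continuousAt (Ioi_mem_nhds ht0))
  have key := abs_le_integral_lap (g := fun u => u * ml α a τ u) (c := 1 / t) (t := t)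
    (H := fun y => C * ((1 / a + 1) * t ^ η * decayMajorant δ τ y))
    (lapConv_mul_ml hα hα2 ha hτ hc) ht0 hcont hmeas
    (((integrable_decayMajorant hδ0 hτ0).const_mul _).const_mul _) (by
      have h0 : ∀ᵐ y : ℝ, y ≠ 0 := by simp [ae_iff]
      filter_upwards [h0] with y hy
      refine (hCb (1 / t) (2 * Real.pi * y) hc).trans ?_
      gcongr
      refine rpow_div_le_decayMajorant ha hτ0 hη (min_le_right _ _) (min_le_left _ _) ht ?_ hy ?_
      · have := Complex.abs_re_le_norm (((1 / t : ℝ) : ℂ) + ((2 * Real.pi * y : ℝ) : ℂ) * Complex.I)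
        rw [re_line, abs_of_pos hc] at this
        exact this
      · have := Complex.abs_im_le_norm (((1 / t : ℝ) : ℂ) + ((2 * Real.pi * y : ℝ) : ℂ) * Complex.I)
        have e : (((1 / t : ℝ) : ℂ) + ((2 * Real.pi * y : ℝ) : ℂ) * Complex.I).im
            = 2 * Real.pi * y := by
          rw [Complex.add_im, Complex.ofReal_im, Complex.im_ofReal_mul, Complex.I_im]; ring
        rw [e, abs_mul, abs_of_pos (by positivity : 0 < 2 * Real.pi)] at this
        have h3 := Real.pi_gt_three
        have h4 := abs_nonneg y
        nlinarith)
  rw [integral_const_mul, integral_const_mul, ← hJ, one_div_mul_cancel ht0.ne', abs_mul,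
    abs_mul, abs_of_pos ht0, abs_of_pos (Real.exp_pos _), Real.exp_neg] at key
  have hE := Real.exp_pos 1
  have e : t ^ η = t * t ^ (η - 1) := by
    rw [Real.rpow_sub_one ht0.ne']; field_simp
  rw [e] at key
  have hp : 0 < t ^ (η - 1) := by positivity
  have key2 : |ml α a τ t| ≤ Real.exp 1 * (C * (1 / a + 1) * J) * t ^ (η - 1) := by
    rw [← div_eq_mul_inv, div_le_iff₀ hE] at key
    have : t * |ml α a τ t| ≤ t * (Real.exp 1 * (C * (1 / a + 1) * J) * t ^ (η - 1)) := by
      linarith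
    exact le_of_mul_le_mul_left this ht0
  linarith

/-! ### Convolution on the half-line -/

/-- Convolution on the half-line, `(f ∗ g)(t) = ∫₀ᵗ f (t - s) g s ds`. -/
noncomputable def cv (f g : ℝ → ℝ) (t : ℝ) : ℝ := ∫ s in (0:ℝ)..t, f (t - s) * g s

/-- Integrability on every bounded interval `(0, T]`. -/
def LocInt (f : ℝ → ℝ) : Prop := ∀ T > (0:ℝ), IntegrableOn f (Set.Ioc 0 T)

/-- `F` vanishes on `(-∞, 0]` and coincides with `f` on `(0, T]`. Such causal representatives turn
half-line convolutions into convolutions on the whole line. -/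
def Causal (T : ℝ) (F f : ℝ → ℝ) : Prop := (∀ t ≤ 0, F t = 0) ∧ ∀ t, 0 < t → t ≤ T → F t = f t

lemma causal_indicator (T : ℝ) (f : ℝ → ℝ) : Causal T ((Set.Ioc 0 T).indicator f) f :=
  ⟨fun _ ht => Set.indicator_of_notMem (fun h => absurd h.1 (not_lt.2 ht)) _,
    fun _ h0 hT => Set.indicator_of_mem (Set.mem_Ioc.2 ⟨h0, hT⟩) _⟩

lemma Causal.convolution {T : ℝ} {F f G g : ℝ → ℝ} (hF : Causal T F f) (hG : Causal T G g) :
    Causal T (MeasureTheory.convolution F G (ContinuousLinearMap.mul ℝ ℝ) volume) (cv f g) := by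
  constructor
  · intro t ht
    rw [convolution_eq_swap]
    refine (integral_congr_ae (ae_of_all _ fun s => ?_)).trans (integral_zero ℝ ℝ)
    simp only [ContinuousLinearMap.mul_apply']
    rcases le_or_gt s 0 with hs | hs
    · rw [hG.1 s hs, mul_zero]
    · rw [hF.1 (t - s) (by linarith), zero_mul]
  · intro t h0 hT
    rw [convolution_eq_swap, cv, intervalIntegral.integral_of_le h0.le,
      integral_Ioc_eq_integral_Ioo, ← integral_indicator measurableSet_Ioo]
    refine integral_congr_ae (ae_of_all _ fun s => ?_)
    simp only [ContinuousLinearMap.mul_apply', Set.indicator_apply, Set.mem_Ioo]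
    split_ifs with hs
    · rw [hF.2 (t - s) (by linarith) (by linarith), hG.2 s hs.1 (by linarith)]
    · rcases le_or_gt s 0 with h | h
      · rw [hG.1 s h, mul_zero]
      · rw [hF.1 (t - s) (by by_contra! h'; exact hs ⟨h, by linarith⟩), zero_mul]

lemma LocInt.integrable_indicator {f : ℝ → ℝ} (hf : LocInt f) {T : ℝ} (hT : 0 < T) :
    Integrable ((Set.Ioc 0 T).indicator f) :=
  (hf T hT).integrable_indicator measurableSet_Ioc

lemma LocInt.cv {f g : ℝ → ℝ} (hf : LocInt f) (hg : LocInt g) : LocInt (cv f g) := by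
  intro T hT
  have h := (hf.integrable_indicator hT).integrable_convolution (ContinuousLinearMap.mul ℝ ℝ)
    (hg.integrable_indicator hT)
  refine (h.integrableOn (s := Set.Ioc 0 T)).congr_fun (fun t ht => ?_) measurableSet_Ioc
  exact ((causal_indicator T f).convolution (causal_indicator T g)).2 t ht.1 ht.2

lemma LocInt.congr {f g : ℝ → ℝ} (hf : LocInt f) (h : ∀ᵐ t, 0 < t → f t = g t) : LocInt g := by
  intro T hT
  refine (hf T hT).congr ?_
  rw [EventuallyEq, ae_restrict_iff' measurableSet_Ioc]
  exact h.mono fun t ht h => ht h.1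

lemma LocInt.add {f g : ℝ → ℝ} (hf : LocInt f) (hg : LocInt g) :
    LocInt (fun t => f t + g t) := fun T hT => (hf T hT).add (hg T hT)

lemma LocInt.sub {f g : ℝ → ℝ} (hf : LocInt f) (hg : LocInt g) :
    LocInt (fun t => f t - g t) := fun T hT => (hf T hT).sub (hg T hT)

lemma LocInt.const_mul {f : ℝ → ℝ} (hf : LocInt f) (c : ℝ) :
    LocInt (fun t => c * f t) := fun T hT => (hf T hT).const_mul c

lemma LocInt.intervalIntegrable {f : ℝ → ℝ} (hf : LocInt f) {t : ℝ} (ht : 0 < t) :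
    IntervalIntegrable f volume 0 t :=
  (intervalIntegrable_iff_integrableOn_Ioc_of_le ht.le).2 (hf t ht)

lemma locInt_of_intervalIntegrable {f : ℝ → ℝ} (hf : ∀ T > (0:ℝ), IntervalIntegrable f volume 0 T) :
    LocInt f := fun T hT =>
  (intervalIntegrable_iff_integrableOn_Ioc_of_le (le_of_lt hT)).1 (hf T hT)

lemma locInt_of_continuous {f : ℝ → ℝ} (hf : Continuous f) : LocInt f :=
  locInt_of_intervalIntegrable fun T _ => hf.intervalIntegrable 0 T

lemma locInt_pw {τ : ℝ} (hτ : 0 < τ) : LocInt (pw τ) :=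
  locInt_of_intervalIntegrable fun T _ => intervalIntegrable_pw hτ 0 T

lemma locInt_ml {α a τ : ℝ} (hα : 1 < α) (hτ : 0 < τ) : LocInt (ml α a τ) :=
  locInt_of_intervalIntegrable fun T _ => intervalIntegrable_ml hα hτ 0 T

lemma cv_comm (f g : ℝ → ℝ) (t : ℝ) : cv f g t = cv g f t := by
  have h := intervalIntegral.integral_comp_sub_left (fun s => f (t - s) * g s) t (a := 0) (b := t)
  simp only [sub_self, sub_zero, sub_sub_cancel] at h
  rw [cv, ← h, cv]
  exact intervalIntegral.integral_congr fun s _ => mul_comm _ _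

lemma cv_congr_right {f g g' : ℝ → ℝ} (h : ∀ᵐ t, 0 < t → g t = g' t) {t : ℝ} (ht : 0 < t) :
    cv f g t = cv f g' t := by
  refine intervalIntegral.integral_congr_ae (h.mono fun s hs hs' => ?_)
  rw [Set.uIoc_of_le ht.le] at hs'
  simp only [hs hs'.1]

lemma cv_congr_left {f f' g : ℝ → ℝ} (h : ∀ᵐ t, 0 < t → f t = f' t) {t : ℝ} (ht : 0 < t) :
    cv f g t = cv f' g t := by
  rw [cv_comm, cv_congr_right h ht, cv_comm]

lemma cv_assoc {f g k : ℝ → ℝ} (hf : LocInt f) (hg : LocInt g) (hk : LocInt k) :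
    ∀ᵐ t, 0 < t → cv f (cv g k) t = cv (cv f g) k t := by
  have key : ∀ n : ℕ, ∀ᵐ t, 0 < t → t ≤ (n:ℝ) + 1 → cv f (cv g k) t = cv (cv f g) k t := by
    intro n
    have hT : (0:ℝ) < (n:ℝ) + 1 := by positivity
    set T := (n:ℝ) + 1 with hTdef
    have hF := hf.integrable_indicator hT
    have hG := hg.integrable_indicator hT
    have hK := hk.integrable_indicator hT
    have cF := causal_indicator T f
    have cG := causal_indicator T g
    have cK := causal_indicator T k
    set F := (Set.Ioc 0 T).indicator f
    set G := (Set.Ioc 0 T).indicator g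
    set K := (Set.Ioc 0 T).indicator k
    have h1 := hF.ae_convolution_exists (ContinuousLinearMap.mul ℝ ℝ) hG
    have h2 := hG.norm.ae_convolution_exists (ContinuousLinearMap.mul ℝ ℝ) hK.norm
    have h3 := hF.norm.ae_convolution_exists (ContinuousLinearMap.mul ℝ ℝ)
      (hG.norm.integrable_convolution (ContinuousLinearMap.mul ℝ ℝ) hK.norm)
    filter_upwards [h3] with t ht h0 hT
    have := convolution_assoc (ContinuousLinearMap.mul ℝ ℝ) (ContinuousLinearMap.mul ℝ ℝ)
      (ContinuousLinearMap.mul ℝ ℝ) (ContinuousLinearMap.mul ℝ ℝ)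
      (fun x y z => by simp [mul_assoc]) hF.1 hG.1 hK.1 h1 h2 ht
    rw [← (cF.convolution (cG.convolution cK)).2 t h0 hT,
      ← ((cF.convolution cG).convolution cK).2 t h0 hT, this]
  filter_upwards [ae_all_iff.2 key] with t ht h0
  obtain ⟨n, hn⟩ := exists_nat_ge t
  exact ht n h0 (by linarith)

lemma cv_sub_right {f g g' : ℝ → ℝ} (hf : Continuous f) (hg : LocInt g) (hg' : LocInt g') {t : ℝ}
    (ht : 0 < t) : cv f (fun s => g s - g' s) t = cv f g t - cv f g' t := by
  have hc : ContinuousOn (fun s => f (t - s)) (Set.uIcc 0 t) := by fun_prop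
  simp only [cv, mul_sub]
  exact intervalIntegral.integral_sub ((hg.intervalIntegrable ht).continuousOn_mul hc)
    ((hg'.intervalIntegrable ht).continuousOn_mul hc)

lemma cv_add_right {f g g' : ℝ → ℝ} (hf : Continuous f) (hg : LocInt g) (hg' : LocInt g') {t : ℝ}
    (ht : 0 < t) : cv f (fun s => g s + g' s) t = cv f g t + cv f g' t := by
  have hc : ContinuousOn (fun s => f (t - s)) (Set.uIcc 0 t) := by fun_prop
  simp only [cv, mul_add]
  exact intervalIntegral.integral_add ((hg.intervalIntegrable ht).continuousOn_mul hc)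
    ((hg'.intervalIntegrable ht).continuousOn_mul hc)

lemma cv_const_mul_right (f g : ℝ → ℝ) (c t : ℝ) :
    cv f (fun s => c * g s) t = c * cv f g t := by
  simp only [cv, mul_left_comm _ c]
  exact intervalIntegral.integral_const_mul _ _

lemma continuous_ml {α a τ : ℝ} (hα : 1 < α) (hτ : 1 ≤ τ) : Continuous (ml α a τ) :=
  (Real.continuous_rpow_const (by linarith)).mul
    ((continuous_mlSer hα (by linarith)).comp (Real.continuous_rpow_const (by linarith)))

lemma continuous_pw {τ : ℝ} (hτ : 1 ≤ τ) : Continuous (pw τ) :=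
  (Real.continuous_rpow_const (by linarith)).div_const _

lemma pw_one (t : ℝ) : pw 1 t = 1 := by simp [pw]

lemma pw_two (t : ℝ) : pw 2 t = t := by norm_num [pw]

lemma cv_pw_one (g : ℝ → ℝ) (t : ℝ) : cv (pw 1) g t = ∫ s in (0:ℝ)..t, g s := by
  simp only [cv, pw_one, one_mul]

lemma cv_ml_pw {α a s τ t : ℝ} (hα : 1 < α) (hs : 0 < s) (hτ : 0 < τ) (ht : 0 < t) :
    cv (ml α a τ) (pw s) t = ml α a (τ + s) t := by
  rw [cv_comm, add_comm, cv, integral_pw_ml hα hs hτ ht]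

/-- Convolving a fractional integral with a Mittag-Leffler kernel raises the kernel's order. -/
lemma cv_ml_cv_pw {α a s τ : ℝ} {g : ℝ → ℝ} (hα : 1 < α) (hs : 0 < s) (hτ : 0 < τ)
    (hg : LocInt g) :
    ∀ᵐ t, 0 < t → cv (ml α a τ) (cv (pw s) g) t = cv (ml α a (τ + s)) g t := by
  filter_upwards [cv_assoc (locInt_ml (a := a) hα hτ) (locInt_pw hs) hg] with t h ht
  rw [h ht]
  exact cv_congr_left (ae_of_all _ fun u hu => cv_ml_pw hα hs hτ hu) ht

/-! ### Variation of constants -/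

/-- A locally integrable function whose primitive vanishes almost everywhere vanishes almost
everywhere. -/
lemma ae_eq_zero_of_primitive {D : ℝ → ℝ} (hD : LocInt D)
    (h : ∀ᵐ t, 0 < t → ∫ s in (0:ℝ)..t, D s = 0) : ∀ᵐ t, 0 < t → D t = 0 := by
  have hc : ContinuousOn (fun t => ∫ s in (0:ℝ)..t, D s) (Set.Ioi 0) := by
    intro t ht
    have ht' : (0:ℝ) < t := ht
    have h1 := intervalIntegral.continuousOn_primitive_interval
      (μ := volume) (f := D) (a := 0) (b := t + 1)
      (by rw [← intervalIntegrable_iff']; exact hD.intervalIntegrable (by linarith))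
    refine (h1.continuousAt ?_).continuousWithinAt
    rw [Set.uIcc_of_le (by linarith)]
    exact Icc_mem_nhds ht' (by linarith)
  have hz : Set.EqOn (fun t => ∫ s in (0:ℝ)..t, D s) (fun _ => 0) (Set.Ioi 0) := by
    refine Measure.eqOn_open_of_ae_eq (μ := volume) ?_ isOpen_Ioi hc continuousOn_const
    rw [EventuallyEq, ae_restrict_iff' measurableSet_Ioi]
    exact h
  have key : ∀ n : ℕ, ∀ᵐ t, t ∈ Set.uIcc (0:ℝ) ((n:ℝ) + 1) → ∀ c ∈ Set.uIcc (0:ℝ) ((n:ℝ) + 1),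
      HasDerivAt (fun x => ∫ s in c..x, D s) (D t) t := fun n =>
    (hD.intervalIntegrable (t := (n:ℝ) + 1) (by positivity)).ae_hasDerivAt_integral
  filter_upwards [ae_all_iff.2 key] with t ht h0
  obtain ⟨n, hn⟩ := exists_nat_ge t
  have h1 := ht n (by rw [Set.uIcc_of_le (by positivity)]; exact ⟨h0.le, by linarith⟩) 0
    Set.left_mem_uIcc
  have h2 : HasDerivAt (fun x => ∫ s in (0:ℝ)..x, D s) 0 t :=
    (hasDerivAt_const t (0:ℝ)).congr_of_eventuallyEq
      (hz.eventuallyEq_of_mem (Ioi_mem_nhds h0))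
  exact h1.unique h2

/-- The variation-of-constants formula. The hypothesis `hG` says that
`₀I_t^{2-α}(w - w₁ s - w₀)` is the double primitive of `q`, and `hqe` is the equation for `q`.
Convolving `hG` with the kernel of order `α - 1` turns both sides into Mittag-Leffler convolutions;
the result is the primitive of the asserted identity. -/
lemma representation {α a γ w₀ w₁ : ℝ} {q f w : ℝ → ℝ} (hα : 1 < α) (hα2 : α < 2) (hγ : 0 < γ)
    (hw : Continuous w) (hf : LocInt f) (hq : LocInt q)
    (hG : ∀ t, 0 < t →
      cv (pw (2 - α)) (fun s => w s - w₁ * s - w₀) t = cv (pw 1) (cv (pw 1) q) t)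
    (hqe : ∀ᵐ t, 0 < t → q t = cv (pw γ) f t - a * w t) :
    ∀ᵐ t, 0 < t → w t = w₀ * ml α a 1 t + w₁ * ml α a 2 t + cv (ml α a (α + γ)) f t := by
  have hv : LocInt (fun s => w s - w₁ * s - w₀) := locInt_of_continuous (by fun_prop)
  have hwl := locInt_of_continuous hw
  have hA := cv_ml_cv_pw (a := a) hα (s := 2 - α) (τ := α - 1) (by linarith) (by linarith) hv
  have hB := cv_ml_cv_pw (a := a) hα (s := 1) (τ := α - 1) (by linarith) (by linarith)
    ((locInt_pw one_pos).cv hq)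
  have hC := cv_ml_cv_pw (a := a) hα (s := 1) (τ := α) one_pos (by linarith) hq
  have hE := cv_ml_cv_pw (a := a) hα (s := γ) (τ := α + 1) hγ (by linarith) hf
  have hF := cv_assoc (locInt_pw one_pos) (locInt_ml (α := α) (a := a) (τ := α + γ) hα
    (by linarith)) hf
  have hlm := (locInt_ml (α := α) (a := a) (τ := α + γ) hα (by linarith)).cv hf
  have hl1 := locInt_ml (α := α) (a := a) (τ := 1) hα one_pos
  have hl2 := locInt_ml (α := α) (a := a) (τ := 2) hα two_pos
  rw [show α - 1 + (2 - α) = 1 by ring] at hA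
  rw [show α - 1 + 1 = α by ring] at hB
  have hp : ∀ᵐ t, 0 < t → ∫ s in (0:ℝ)..t,
      (w s - ((w₀ * ml α a 1 s + w₁ * ml α a 2 s) + cv (ml α a (α + γ)) f s)) = 0 := by
    filter_upwards [hA, hB, hC, hE, hF] with t hA hB hC hE hF ht
    rw [← cv_pw_one, cv_sub_right (continuous_pw le_rfl) hwl
      (((hl1.const_mul _).add (hl2.const_mul _)).add hlm) ht,
      cv_add_right (continuous_pw le_rfl) ((hl1.const_mul _).add (hl2.const_mul _)) hlm ht,
      cv_add_right (continuous_pw le_rfl) (hl1.const_mul _) (hl2.const_mul _) ht,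
      cv_const_mul_right, cv_const_mul_right, hF ht]
    have e1 : cv (pw 1) (ml α a 1) t = ml α a 2 t := by
      rw [cv_comm, cv_ml_pw hα one_pos one_pos ht]; norm_num
    have e2 : cv (pw 1) (ml α a 2) t = ml α a 3 t := by
      rw [cv_comm, cv_ml_pw hα one_pos two_pos ht]; norm_num
    have e3 : cv (cv (pw 1) (ml α a (α + γ))) f t = cv (ml α a (α + 1 + γ)) f t := by
      refine cv_congr_left (ae_of_all _ fun u hu => ?_) ht
      rw [cv_comm, cv_ml_pw hα one_pos (by linarith) hu]
      congr 1; ring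
    have e4 : cv (ml α a 1) (fun s => w s - w₁ * s - w₀) t
        = cv (ml α a 1) w t - (w₁ * ml α a 3 t + w₀ * ml α a 2 t) := by
      have : (fun s => w s - w₁ * s - w₀) = fun s => w s - (w₁ * pw 2 s + w₀ * pw 1 s) := by
        ext s; rw [pw_one, pw_two]; ring
      rw [this, cv_sub_right (continuous_ml hα le_rfl) hwl
        (((locInt_pw two_pos).const_mul _).add ((locInt_pw one_pos).const_mul _)) ht,
        cv_add_right (continuous_ml hα le_rfl) ((locInt_pw two_pos).const_mul _)
        ((locInt_pw one_pos).const_mul _) ht, cv_const_mul_right, cv_const_mul_right,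
        cv_ml_pw hα two_pos one_pos ht, cv_ml_pw hα one_pos one_pos ht]
      norm_num
    have e5 : cv (ml α a (α + 1)) q t
        = cv (ml α a (α + 1)) (cv (pw γ) f) t - a * cv (ml α a (α + 1)) w t := by
      rw [cv_congr_right hqe ht, cv_sub_right (continuous_ml hα (by linarith))
        ((locInt_pw hγ).cv hf) (hwl.const_mul _) ht, cv_const_mul_right]
    have e6 : cv (pw 1) w t = cv (ml α a 1) w t + a * cv (ml α a (α + 1)) w t := by
      rw [cv_comm, cv_comm (ml α a 1), cv_comm (ml α a (α + 1)), ← cv_const_mul_right,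
        ← cv_add_right hw hl1 ((locInt_ml hα (by linarith)).const_mul _) ht]
      refine cv_congr_right (ae_of_all _ fun u hu => ?_) ht
      rw [ml_rec hα one_pos hu, add_comm 1 α]; ring
    have e7 : cv (ml α a (α - 1)) (cv (pw (2 - α)) (fun s => w s - w₁ * s - w₀)) t
        = cv (ml α a (α - 1)) (cv (pw 1) (cv (pw 1) q)) t :=
      cv_congr_right (ae_of_all _ hG) ht
    rw [hA ht, hB ht, hC ht, e4, e5, hE ht] at e7
    rw [e1, e2, e3, e6]
    linarith
  have := ae_eq_zero_of_primitive
    (hwl.sub (((hl1.const_mul w₀).add (hl2.const_mul w₁)).add hlm)) hp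
  filter_upwards [this] with t h ht
  linarith [h ht]

/-! ### The Caputo equation -/

lemma rlInt_eq_cv (σ : ℝ) (f : ℝ → ℝ) (t : ℝ) : rlInt σ f t = cv (pw σ) f t := by
  rw [rlInt, cv, ← intervalIntegral.integral_const_mul]
  refine intervalIntegral.integral_congr fun s _ => ?_
  simp only [pw]; ring

/-- Since `w(s) - w'(0) s - w(0) = o(s)`, its fractional integral of order `2 - α` is
`O(t ^ (3 - α))`, so its derivative at the origin vanishes. -/
lemma deriv_capKernel_zero {α : ℝ} {w : ℝ → ℝ} (hα2 : α < 2)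
    (hw : DifferentiableAt ℝ w 0) (hd : DifferentiableAt ℝ (capKernel α w) 0) :
    deriv (capKernel α w) 0 = 0 := by
  have hG : ∀ t, capKernel α w t = cv (pw (2 - α)) (fun s => w s - deriv w 0 * s - w 0) t := by
    intro t
    rw [capKernel, if_neg hα2.ne, rlInt_eq_cv]
  have hG0 : capKernel α w 0 = 0 := by rw [hG, cv, intervalIntegral.integral_same]
  obtain ⟨δ, hδ, hv⟩ : ∃ δ > 0, ∀ s, 0 < s → s < δ → |w s - deriv w 0 * s - w 0| ≤ s := by
    have h := (hasDerivAt_iff_isLittleO.1 hw.hasDerivAt).bound one_pos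
    obtain ⟨δ, hδ, h⟩ := Metric.eventually_nhds_iff.1 h
    refine ⟨δ, hδ, fun s h0 hs => ?_⟩
    have := h (y := s) (by rw [Real.dist_eq, sub_zero, abs_of_pos h0]; exact hs)
    simp only [sub_zero, smul_eq_mul, one_mul, Real.norm_eq_abs, abs_of_pos h0] at this
    rwa [sub_right_comm, mul_comm] at this
  have hbd : ∀ t, 0 < t → t < δ → |capKernel α w t| ≤ pw (2 - α + 2) t := by
    intro t h0 ht
    rw [hG, cv, ← integral_pw_pw (by linarith) two_pos h0, ← Real.norm_eq_abs]
    refine intervalIntegral.norm_integral_le_of_norm_le h0.le (ae_of_all _ fun s hs => ?_)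
      (intervalIntegrable_pw_pw (by linarith) two_pos h0)
    rw [norm_mul, Real.norm_of_nonneg (pw_nonneg (by linarith) (by linarith [hs.2])), pw_two]
    refine mul_le_mul_of_nonneg_left ?_ (pw_nonneg (by linarith) (by linarith [hs.2]))
    exact hv s hs.1 (by linarith [hs.2])
  have hs : Tendsto (fun t => capKernel α w t / t) (nhdsWithin 0 (Set.Ioi 0))
      (nhds (deriv (capKernel α w) 0)) := by
    have := hd.hasDerivAt.tendsto_slope.mono_left
      (nhdsWithin_mono 0 (fun t (ht : (0:ℝ) < t) => ht.ne'))
    refine this.congr fun t => ?_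
    rw [slope_def_field, hG0, sub_zero, sub_zero]
  have hz : Tendsto (fun t => capKernel α w t / t) (nhdsWithin 0 (Set.Ioi 0)) (nhds 0) := by
    have hlim : Tendsto (fun t : ℝ => t ^ (2 - α) / Real.Gamma (2 - α + 2))
        (nhdsWithin 0 (Set.Ioi 0)) (nhds 0) := by
      have h : Continuous fun t : ℝ => t ^ (2 - α) / Real.Gamma (2 - α + 2) :=
        (Real.continuous_rpow_const (by linarith)).div_const _
      have := h.tendsto 0
      rw [Real.zero_rpow (by linarith), zero_div] at this
      exact this.mono_left nhdsWithin_le_nhds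
    refine squeeze_zero_norm' ?_ hlim
    filter_upwards [Ioo_mem_nhdsGT hδ] with t ht
    rw [norm_div, Real.norm_eq_abs, Real.norm_of_nonneg ht.1.le, div_le_iff₀ ht.1]
    refine (hbd t ht.1 ht.2).trans (le_of_eq ?_)
    rw [pw, show 2 - α + 2 - 1 = (2 - α) + 1 by ring, Real.rpow_add_one ht.1.ne']
    ring
  exact tendsto_nhds_unique hs hz

lemma capKernel_eq_double_primitive {α : ℝ} {w : ℝ → ℝ} (hα2 : α < 2)
    (hw : DifferentiableAt ℝ w 0) (hAC : ∀ T > (0:ℝ), AC2On (capKernel α w) T) {t : ℝ}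
    (ht : 0 < t) :
    cv (pw (2 - α)) (fun s => w s - deriv w 0 * s - w 0) t
      = cv (pw 1) (cv (pw 1) (caputoD α w)) t := by
  have hG : ∀ t, capKernel α w t = cv (pw (2 - α)) (fun s => w s - deriv w 0 * s - w 0) t := by
    intro t
    rw [capKernel, if_neg hα2.ne, rlInt_eq_cv]
  have hG0 : capKernel α w 0 = 0 := by rw [hG, cv, intervalIntegral.integral_same]
  have hq : LocInt (caputoD α w) := locInt_of_intervalIntegrable fun T hT => (hAC T hT).2.1
  obtain ⟨h1, -, h3⟩ := hAC t ht
  have hd0 := deriv_capKernel_zero hα2 hw (h1 0 ⟨le_rfl, ht.le⟩)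
  have hder : ∀ s ∈ Set.uIcc 0 t,
      HasDerivAt (capKernel α w) (cv (pw 1) (caputoD α w) s) s := by
    intro s hs
    rw [Set.uIcc_of_le ht.le] at hs
    have := (h1 s hs).hasDerivAt
    rwa [h3 s hs, hd0, zero_add, ← cv_pw_one] at this
  rw [← hG, cv_pw_one, intervalIntegral.integral_eq_sub_of_hasDerivAt hder
    (((locInt_pw one_pos).cv hq).intervalIntegrable ht), hG0, sub_zero]

/-! ### Growth of the forced term -/

/-- For `γ ≥ α / 2` the kernel of order `α + γ` is bounded below by a multiple of `t ^ (γ - 1)`,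
because `a e_{α+γ} = t ^ (γ - 1) / Γ(γ) - e_γ` and `e_γ` decays strictly faster. -/
lemma exists_ml_lower {α a γ : ℝ} (hα : 1 < α) (hα2 : α < 2) (ha : 0 < a) (hγ : α / 2 ≤ γ) :
    ∃ c T, 0 < c ∧ 1 ≤ T ∧ ∀ t, T ≤ t → c * t ^ (γ - 1) ≤ ml α a (α + γ) t := by
  have hγ0 : 0 < γ := by linarith
  obtain ⟨C, hC, hCb⟩ := exists_ml_decay (τ := γ) (η := γ - α / 2) hα hα2 ha hγ (by linarith)
    (by linarith)
  have hΓ := Real.Gamma_pos_of_pos hγ0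
  have hlim : Tendsto (fun t : ℝ => C * t ^ (-(α / 2))) atTop (nhds 0) := by
    simpa using (tendsto_rpow_neg_atTop (by linarith : 0 < α / 2)).const_mul C
  have hev := hlim.eventually (gt_mem_nhds (by positivity : 0 < 1 / (2 * Real.Gamma γ)))
  obtain ⟨T, hT⟩ := eventually_atTop.1 hev
  refine ⟨1 / (2 * Real.Gamma γ * a), max 1 T, by positivity, le_max_left _ _, fun t ht => ?_⟩
  have ht1 : 1 ≤ t := (le_max_left _ _).trans ht
  have ht0 : 0 < t := by linarith
  have h1 := hCb t ht1
  have h2 := hT t ((le_max_right _ _).trans ht)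
  have h3 := ml_rec (a := a) hα hγ0 ht0
  have hpos : 0 < t ^ (γ - 1) := Real.rpow_pos_of_pos ht0 _
  have h4 : t ^ (γ - α / 2 - 1) = t ^ (-(α / 2)) * t ^ (γ - 1) := by
    rw [← Real.rpow_add ht0]; congr 1; ring
  rw [h4, ← mul_assoc] at h1
  have h5 : ml α a γ t ≤ 1 / (2 * Real.Gamma γ) * t ^ (γ - 1) :=
    (le_abs_self _).trans (h1.trans (mul_le_mul_of_nonneg_right h2.le hpos.le))
  rw [pw, add_comm γ α] at h3
  have h6 : 1 / (2 * Real.Gamma γ * a) * t ^ (γ - 1)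
      = (t ^ (γ - 1) / Real.Gamma γ - 1 / (2 * Real.Gamma γ) * t ^ (γ - 1)) / a := by
    field_simp; ring
  rw [h6, div_le_iff₀ ha]
  linarith

/-- The mass `∫₀ᴿ f > 0` of the nonnegative forcing already produces growth `t ^ (γ - 1)`. -/
lemma exists_cv_lower {α a γ R : ℝ} {f : ℝ → ℝ} (hα : 1 < α) (hα2 : α < 2) (ha : 0 < a)
    (hγ : α / 2 ≤ γ) (hf : LocInt f) (hf0 : ∀ᵐ t, 0 < t → 0 ≤ f t) (hR : 0 < R)
    (hfR : 0 < ∫ s in (0:ℝ)..R, f s) :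
    ∃ c T, 0 < c ∧ 1 ≤ T ∧ ∀ t, T ≤ t → c * t ^ (γ - 1) ≤ cv (ml α a (α + γ)) f t := by
  obtain ⟨c, T, hc, hT, hcT⟩ := exists_ml_lower hα hα2 ha hγ
  set m := min 1 ((1 / 2 : ℝ) ^ (γ - 1)) with hm
  have hm0 : 0 < m := lt_min one_pos (Real.rpow_pos_of_pos (by norm_num) _)
  refine ⟨c * m * ∫ s in (0:ℝ)..R, f s, 2 * R + T, by positivity, by linarith, fun t ht => ?_⟩
  have ht0 : 0 < t := by linarith
  have hRt : R ≤ t := by linarith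
  have hpos : 0 < t ^ (γ - 1) := Real.rpow_pos_of_pos ht0 _
  -- On `[t / 2, t]` the power is at least `m t ^ (γ - 1)`, whatever the sign of `γ - 1`.
  have hker : ∀ s, 0 < s → s ≤ R → c * m * t ^ (γ - 1) ≤ ml α a (α + γ) (t - s) := by
    intro s h0 hs
    refine le_trans ?_ (hcT (t - s) (by linarith))
    rw [mul_assoc]
    refine mul_le_mul_of_nonneg_left ?_ hc.le
    rcases le_total 1 γ with h | h
    · calc m * t ^ (γ - 1) ≤ (1 / 2 : ℝ) ^ (γ - 1) * t ^ (γ - 1) :=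
            mul_le_mul_of_nonneg_right (min_le_right _ _) hpos.le
        _ = (1 / 2 * t) ^ (γ - 1) := (Real.mul_rpow (by norm_num) ht0.le).symm
        _ ≤ (t - s) ^ (γ - 1) :=
            Real.rpow_le_rpow (by linarith) (by linarith) (by linarith)
    · calc m * t ^ (γ - 1) ≤ 1 * t ^ (γ - 1) :=
            mul_le_mul_of_nonneg_right (min_le_left _ _) hpos.le
        _ = t ^ (γ - 1) := one_mul _
        _ ≤ (t - s) ^ (γ - 1) :=
            Real.rpow_le_rpow_of_nonpos (by linarith) (by linarith) (by linarith)
  have hcm : Continuous fun s => ml α a (α + γ) (t - s) :=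
    (continuous_ml hα (by linarith)).comp (by fun_prop)
  have hint : IntervalIntegrable (fun s => ml α a (α + γ) (t - s) * f s) volume 0 t :=
    (hf.intervalIntegrable ht0).continuousOn_mul hcm.continuousOn
  have hintR : IntervalIntegrable (fun s => ml α a (α + γ) (t - s) * f s) volume 0 R :=
    (hf.intervalIntegrable hR).continuousOn_mul hcm.continuousOn
  have hintRt : IntervalIntegrable (fun s => ml α a (α + γ) (t - s) * f s) volume R t :=
    hintR.symm.trans hint
  rw [cv, ← intervalIntegral.integral_add_adjacent_intervals hintR hintRt]
  have hA : c * m * (∫ s in (0:ℝ)..R, f s) * t ^ (γ - 1)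
      ≤ ∫ s in (0:ℝ)..R, ml α a (α + γ) (t - s) * f s := by
    rw [mul_right_comm, ← intervalIntegral.integral_const_mul,
      intervalIntegral.integral_of_le hR.le, intervalIntegral.integral_of_le hR.le]
    refine integral_mono_ae ((hf R hR).const_mul _)
      ((intervalIntegrable_iff_integrableOn_Ioc_of_le hR.le).1 hintR) ?_
    rw [EventuallyLE, ae_restrict_iff' measurableSet_Ioc]
    filter_upwards [hf0] with s hs hs'
    exact mul_le_mul_of_nonneg_right (hker s hs'.1 hs'.2) (hs hs'.1)
  have hB : 0 ≤ ∫ s in R..t, ml α a (α + γ) (t - s) * f s := by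
    rw [intervalIntegral.integral_of_le hRt, integral_Ioc_eq_integral_Ioo]
    refine integral_nonneg_of_ae ?_
    rw [EventuallyLE, ae_restrict_iff' measurableSet_Ioo]
    filter_upwards [hf0] with s hs hs'
    exact mul_nonneg (ml_nonneg hα hα2 ha (by linarith) (by linarith [hs'.2]))
      (hs (by linarith [hs'.1]))
  linarith

/-- The homogeneous solutions are negligible against `t ^ (γ - 1)` when `γ > 2 - α`. -/
lemma tendsto_rpow_mul_ml {α a γ τ : ℝ} (hα : 1 < α) (hα2 : α < 2) (ha : 0 < a)
    (hτ : α / 2 ≤ τ) (hτ2 : τ ≤ 2) (hγ : 2 < α + γ) :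
    Tendsto (fun t => t ^ (1 - γ) * ml α a τ t) atTop (nhds 0) := by
  obtain ⟨C, hC, hCb⟩ := exists_ml_decay (τ := τ) (η := (2 - α + γ) / 2) hα hα2 ha hτ
    (by linarith) (by linarith)
  have hlim : Tendsto (fun t : ℝ => C * t ^ (-((γ - 2 + α) / 2))) atTop (nhds 0) := by
    simpa using (tendsto_rpow_neg_atTop (by linarith : 0 < (γ - 2 + α) / 2)).const_mul C
  refine squeeze_zero_norm' ?_ hlim
  filter_upwards [eventually_ge_atTop 1] with t ht
  have ht0 : 0 < t := by linarith
  have hpos : 0 < t ^ (1 - γ) := Real.rpow_pos_of_pos ht0 _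
  rw [norm_mul, Real.norm_of_nonneg hpos.le, Real.norm_eq_abs]
  refine (mul_le_mul_of_nonneg_left (hCb t ht) hpos.le).trans (le_of_eq ?_)
  rw [mul_left_comm, ← Real.rpow_add ht0]
  congr 2; ring

/-- Two continuous functions ordered almost everywhere on `(T, ∞)` are ordered everywhere there. -/
lemma le_of_ae_le_Ioi {g h : ℝ → ℝ} {T : ℝ} (hg : ContinuousOn g (Set.Ioi T))
    (hh : ContinuousOn h (Set.Ioi T)) (hle : ∀ᵐ t, T < t → g t ≤ h t) {t : ℝ} (ht : T < t) :
    g t ≤ h t := by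
  have : Set.EqOn (fun t => g t ⊓ h t) g (Set.Ioi T) := by
    refine Measure.eqOn_open_of_ae_eq (μ := volume) ?_ isOpen_Ioi (hg.inf hh) hg
    rw [EventuallyEq, ae_restrict_iff' measurableSet_Ioi]
    exact hle.mono fun s hs hs' => inf_eq_left.2 (hs hs')
  exact inf_eq_left.1 (this ht)

/-- The forcing dominates `b |w| ^ p` with `w` continuous and not identically zero, so it has
positive mass on some `(0, R]`. -/
lemma exists_integral_pos {p b : ℝ} {f w : ℝ → ℝ} (hb : 0 < b) (hp : 1 < p) (hw : Continuous w)
    (hw0 : ∃ t : ℝ, 0 ≤ t ∧ w t ≠ 0) (hf : LocInt f)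
    (hfw : ∀ᵐ t, 0 < t → b * |w t| ^ p ≤ f t) :
    ∃ R, 0 < R ∧ 0 < ∫ s in (0:ℝ)..R, f s := by
  obtain ⟨t₀, ht₀, hwt₀⟩ := hw0
  refine ⟨t₀ + 1, by linarith, ?_⟩
  have hc : Continuous fun t => b * |w t| ^ p :=
    continuous_const.mul (hw.abs.rpow_const fun _ => Or.inr (by linarith))
  have h1 : 0 < ∫ s in (0:ℝ)..(t₀ + 1), b * |w s| ^ p := by
    refine intervalIntegral.integral_pos (by linarith) hc.continuousOn
      (fun s _ => by positivity) ⟨t₀, ⟨ht₀, by linarith⟩, ?_⟩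
    have := Real.rpow_pos_of_pos (abs_pos.2 hwt₀) p
    positivity
  refine h1.trans_le ?_
  rw [intervalIntegral.integral_of_le (by linarith), intervalIntegral.integral_of_le (by linarith)]
  refine integral_mono_ae (locInt_of_continuous hc _ (by linarith)) (hf _ (by linarith)) ?_
  rw [EventuallyLE, ae_restrict_iff' measurableSet_Ioc]
  exact hfw.mono fun s hs hs' => hs hs'.1

/-- Lemma 2.3 (iii): if γ ≥ α/2 and α + γ > 2, then liminf t^{1−γ} w(t) > 0. -/
theorem liminf_pos_iii
    (γ α p a b : ℝ) (f w : ℝ → ℝ)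
    (hγ : 0 < γ) (hα1 : 1 < α) (hα2 : α < 2) (hp : 1 < p) (ha : 0 < a) (hb : 0 < b)
    (hf : ∀ T > (0:ℝ), IntervalIntegrable f volume 0 T)
    (hw : ContDiff ℝ 1 w)
    (hw0 : ∃ t : ℝ, 0 ≤ t ∧ w t ≠ 0)
    (hAC : ∀ T > (0:ℝ), AC2On (capKernel α w) T)
    (heq : ∀ᵐ t ∂(volume.restrict (Set.Ici (0:ℝ))),
      caputoD α w t + a * w t = rlInt γ f t ∧ f t ≥ b * |w t| ^ p)
    (hγα : α / 2 ≤ γ) (hαγ : 2 < α + γ) :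
    0 < liminf (fun t : ℝ => ((t ^ (1 - γ) * w t : ℝ) : EReal)) atTop := by
  have hwc : Continuous w := hw.continuous
  have hfl : LocInt f := locInt_of_intervalIntegrable hf
  rw [ae_restrict_iff' measurableSet_Ici] at heq
  have hfw : ∀ᵐ t, 0 < t → b * |w t| ^ p ≤ f t := heq.mono fun t h ht => (h ht.le).2
  have hqe : ∀ᵐ t, 0 < t → caputoD α w t = cv (pw γ) f t - a * w t := by
    filter_upwards [heq] with t h ht
    rw [← rlInt_eq_cv]
    linarith [(h (le_of_lt ht)).1]
  have hrep := representation (w₀ := w 0) (w₁ := deriv w 0) hα1 hα2 hγ hwc hfl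
    (locInt_of_intervalIntegrable fun T hT => (hAC T hT).2.1)
    (fun t ht => capKernel_eq_double_primitive hα2 (hw.differentiable one_ne_zero 0) hAC ht) hqe
  obtain ⟨R, hR, hfR⟩ := exists_integral_pos hb hp hwc hw0 hfl hfw
  obtain ⟨c, T, hc, hT, hcT⟩ := exists_cv_lower hα1 hα2 ha hγα hfl
    (hfw.mono fun t h ht => (by positivity : 0 ≤ b * |w t| ^ p).trans (h ht)) hR hfR
  have hhom : Tendsto (fun t => w 0 * (t ^ (1 - γ) * ml α a 1 t)
      + deriv w 0 * (t ^ (1 - γ) * ml α a 2 t)) atTop (nhds 0) := by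
    simpa using ((tendsto_rpow_mul_ml (τ := 1) hα1 hα2 ha (by linarith) one_le_two hαγ).const_mul
      (w 0)).add ((tendsto_rpow_mul_ml (τ := 2) hα1 hα2 ha (by linarith) le_rfl hαγ).const_mul
      (deriv w 0))
  obtain ⟨S, hS⟩ := eventually_atTop.1
    (hhom.eventually (lt_mem_nhds (by linarith : -(c / 2) < 0)))
  have hae : ∀ᵐ t, max S T < t → c / 2 ≤ t ^ (1 - γ) * w t := by
    filter_upwards [hrep] with t h ht
    have htT : T ≤ t := (le_max_right _ _).trans ht.le
    have ht0 : 0 < t := by linarith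
    have h1 := hS t ((le_max_left _ _).trans ht.le)
    have h2 := mul_le_mul_of_nonneg_left (hcT t htT) (Real.rpow_nonneg ht0.le (1 - γ))
    rw [mul_left_comm, ← Real.rpow_add ht0, show 1 - γ + (γ - 1) = 0 by ring, Real.rpow_zero,
      mul_one] at h2
    rw [h ht0]
    linarith
  have hall : ∀ t, max S T < t → c / 2 ≤ t ^ (1 - γ) * w t := by
    intro t ht
    refine le_of_ae_le_Ioi (g := fun _ => c / 2) (h := fun t => t ^ (1 - γ) * w t)
      continuousOn_const ?_ hae ht
    refine ContinuousOn.mul (fun s hs => ?_) hwc.continuousOn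
    have hs0 : s ≠ 0 := by
      have : T < s := (le_max_right _ _).trans_lt hs
      linarith
    exact (Real.continuousAt_rpow_const s _ (Or.inl hs0)).continuousWithinAt
  have hlow : ((c / 2 : ℝ) : EReal)
      ≤ liminf (fun t : ℝ => ((t ^ (1 - γ) * w t : ℝ) : EReal)) atTop := by
    refine le_liminf_of_le (by isBoundedDefault) ?_
    filter_upwards [eventually_gt_atTop (max S T)] with t ht
    exact EReal.coe_le_coe_iff.2 (hall t ht)
  exact (EReal.coe_pos.2 (by linarith : 0 < c / 2)).trans_le hlow
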